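/- arXiv:1605.02171 — 2 statements merged into one kernel-verified Lean document; each statement's English description precedes it below -/
import Mathlib

section
/- Let f = h + \overline{g} \in \mathcal{AK}^0_H, where h(z) = z + \sum_{n=2}^{\infty} a_n z^n and g(z) = \sum_{n=2}^{\infty} b_n z^n on \mathbb{D}. Then the second Taylor coefficient satisfies |a_2| \leq 2/\sqrt{3}. -/
open Complex Metric ComplexConjugate

noncomputable section

/-!
Convexity of the images of the discs `ball 0 r` makes `f = h + conj g` injective: at the first
radius where two points collide they lie on the boundary of a disc with convex image, and both
local inverses at the common value must agree with the inverse on the disc.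

Hence, for `0 < ‖a‖ < 1 / 2`, the image of `ball a ‖a‖` is convex and omits its boundary point
`f 0`, where it has a support line. That line is of the form `Re (m * ·) = const`, and
`Re (m * f)` is the real part of the holomorphic function `H = m * h + conj m * g`. The first- and
second-order conditions for the maximum of `Re H` on the circle at `0` give
`Re (a h''(0) + (a ^ 2 / conj a) g''(0)) ≤ 1`. Adding this for two values of `a` whose arguments
differ by `π / 3` eliminates `g''(0)`, and `‖a‖ → 1 / 2` gives the bound.
-/

open Filter Set Topology

section LocalHomeomorph

variable {X Y : Type*} [TopologicalSpace X] [TopologicalSpace Y] {f : X → Y} {s : Set X}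

lemma isOpen_image_of_isLocalHomeomorphOn (hs : IsOpen s) (hf : IsLocalHomeomorphOn f s) :
    IsOpen (f '' s) := by
  rw [isOpen_iff_mem_nhds]
  rintro _ ⟨x, hx, rfl⟩
  rw [← hf.map_nhds_eq hx]
  exact image_mem_map (hs.mem_nhds hx)

lemma closure_image_inter_inter_subset [T2Space X] {t : Set X} (hs : IsOpen s) (ht : IsOpen t)
    (hfs : IsLocalHomeomorphOn f s) (hft : IsLocalHomeomorphOn f t) (hinjs : InjOn f s)
    (hinjt : InjOn f t) : closure (f '' (s ∩ t)) ∩ (f '' s ∩ f '' t) ⊆ f '' (s ∩ t) := by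
  rintro _ ⟨hcl, ⟨y, hys, rfl⟩, z, hzt, hzy⟩
  suffices y = z from ⟨y, ⟨hys, this ▸ hzt⟩, rfl⟩
  by_contra hne
  obtain ⟨P, Q, hP, hQ, hyP, hzQ, hPQ⟩ := t2_separation hne
  have hP' : f '' (s ∩ P) ∈ 𝓝 (f y) :=
    hfs.map_nhds_eq hys ▸ image_mem_map ((hs.inter hP).mem_nhds ⟨hys, hyP⟩)
  have hQ' : f '' (t ∩ Q) ∈ 𝓝 (f y) :=
    hzy ▸ hft.map_nhds_eq hzt ▸ image_mem_map ((ht.inter hQ).mem_nhds ⟨hzt, hzQ⟩)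
  obtain ⟨w, ⟨⟨p, hp, hpw⟩, q, hq, hqw⟩, r, hr, hrw⟩ :=
    mem_closure_iff_nhds.1 hcl _ (inter_mem hP' hQ')
  have hpr : p = r := hinjs hp.1 hr.1 (hpw.trans hrw.symm)
  have hqr : q = r := hinjt hq.1 hr.2 (hqw.trans hrw.symm)
  exact disjoint_left.1 hPQ hp.2 (hpr.trans hqr.symm ▸ hq.2)

lemma isCompact_setOf_ne_image_eq [T2Space X] [T2Space Y] {K : Set X} (hK : IsCompact K)
    (hf : IsLocalHomeomorphOn f K) :
    IsCompact {p : X × X | p ∈ K ×ˢ K ∧ p.1 ≠ p.2 ∧ f p.1 = f p.2} := by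
  refine (hK.prod hK).of_isClosed_subset (isClosed_of_closure_subset ?_) fun p hp => hp.1
  intro p hp
  have hpK : p ∈ K ×ˢ K :=
    (hK.prod hK).isClosed.closure_subset (closure_mono (fun q hq => hq.1) hp)
  have hcont : ContinuousAt (fun q : X × X => (f q.1, f q.2)) p :=
    ((hf.continuousAt hpK.1).comp continuousAt_fst).prodMk
      ((hf.continuousAt hpK.2).comp continuousAt_snd)
  refine ⟨hpK, fun hdiag => ?_, ?_⟩
  · obtain ⟨e, hpe, rfl⟩ := hf p.1 hpK.1
    obtain ⟨q, hqe, -, hne, heq⟩ := mem_closure_iff_nhds.1 hp (e.source ×ˢ e.source)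
      ((e.open_source.prod e.open_source).mem_nhds ⟨hpe, hdiag ▸ hpe⟩)
    exact hne (e.injOn hqe.1 hqe.2 heq)
  · have := hcont.continuousWithinAt.mem_closure_image hp
    exact isClosed_diagonal.closure_subset
      (closure_mono (by rintro _ ⟨q, hq, rfl⟩; exact hq.2.2) this)

end LocalHomeomorph

section ConvexImage

variable {X E : Type*} [TopologicalSpace X] [T2Space X] [AddCommGroup E] [Module ℝ E]
  [TopologicalSpace E] [IsTopologicalAddGroup E] [ContinuousSMul ℝ E] [LocallyConvexSpace ℝ E]
  {f : X → E} {s : Set X}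

lemma nhdsWithin_image_le_map_nhdsWithin (hs : IsOpen s)
    (hf : IsLocalHomeomorphOn f (closure s)) (hinj : InjOn f s) (hconv : Convex ℝ (f '' s))
    {x : X} (hx : x ∈ closure s) : 𝓝[f '' s] (f x) ≤ map f (𝓝[s] x) := by
  have hfs : IsLocalHomeomorphOn f s := hf.mono subset_closure
  refine (nhdsWithin_basis_open x s).map f |>.ge_iff.2 fun V ⟨hxV, hV⟩ => ?_
  obtain ⟨e, hxe, rfl⟩ := hf x hx
  set N := V ∩ e.source
  have hN : IsOpen N := hV.inter e.open_source
  have hxN : x ∈ N := ⟨hxV, hxe⟩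
  have hNe : IsLocalHomeomorphOn e N := fun z hz => ⟨e, hz.2, rfl⟩
  obtain ⟨S, hS, hSconv, hSN⟩ := (locallyConvexSpace_iff_exists_convex_subset ℝ E).1 inferInstance
    (e x) (e '' N) ((isOpen_image_of_isLocalHomeomorphOn hN hNe).mem_nhds (mem_image_of_mem e hxN))
  have hopen : IsOpen (e '' (N ∩ s)) :=
    isOpen_image_of_isLocalHomeomorphOn (hN.inter hs) (hfs.mono inter_subset_right)
  have hmeet : (S ∩ e '' s ∩ e '' (N ∩ s)).Nonempty := by
    obtain ⟨z, ⟨hzN, hzS⟩, hzs⟩ := mem_closure_iff_nhds.1 hx (N ∩ e ⁻¹' S)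
      (inter_mem (hN.mem_nhds hxN) (hf.continuousAt hx hS))
    exact ⟨e z, ⟨hzS, mem_image_of_mem e hzs⟩, mem_image_of_mem e ⟨hzN, hzs⟩⟩
  -- On the connected set `S ∩ e '' s`, the inverses of `e` on `N` and on `s` must agree.
  have hclopen : closure (e '' (N ∩ s)) ∩ (S ∩ e '' s) ⊆ e '' (N ∩ s) :=
    (inter_subset_inter_right _ (inter_subset_inter_left _ hSN)).trans
      (closure_image_inter_inter_subset hN hs hNe hfs (e.injOn.mono inter_subset_right) hinj)
  have hsub : S ∩ e '' s ⊆ e '' (N ∩ s) :=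
    (hSconv.inter hconv).isPreconnected.subset_of_closure_inter_subset hopen hmeet hclopen
  rw [inter_comm] at hsub
  exact mem_of_superset (inter_mem_nhdsWithin _ hS)
    (hsub.trans (image_mono (inter_subset_inter_left s inter_subset_left)))

lemma injOn_closure_of_convex_image (hs : IsOpen s) (hf : IsLocalHomeomorphOn f (closure s))
    (hinj : InjOn f s) (hconv : Convex ℝ (f '' s)) : InjOn f (closure s) := by
  intro x hx y hy hxy
  by_contra hne
  obtain ⟨U, V, hU, hV, hxU, hyV, hUV⟩ := t2_separation hne
  have hlift : ∀ {z W}, z ∈ closure s → f z = f x → IsOpen W → z ∈ W →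
      ∀ᶠ w in 𝓝[f '' s] (f x), w ∈ f '' (W ∩ s) := fun {z W} hz hzx hW hzW =>
    hzx ▸ nhdsWithin_image_le_map_nhdsWithin hs hf hinj hconv hz
      (image_mem_map (inter_mem (mem_nhdsWithin_of_mem_nhds (hW.mem_nhds hzW))
        self_mem_nhdsWithin))
  have : (𝓝[f '' s] (f x)).NeBot := mem_closure_iff_nhdsWithin_neBot.1
    (hf.continuousAt hx |>.continuousWithinAt.mem_closure_image hx)
  obtain ⟨w, ⟨a, ha, haw⟩, b, hb, hbw⟩ :=
    ((hlift hx rfl hU hxU).and (hlift hy hxy.symm hV hyV)).exists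
  have hab : a = b := hinj ha.2 hb.2 (haw.trans hbw.symm)
  exact disjoint_left.1 hUV ha.1 (hab ▸ hb.1)

lemma injOn_ball_of_convex_image [T2Space E] {F : Type*} [NormedAddCommGroup F]
    [NormedSpace ℝ F] [ProperSpace F] {f : F → E} {c : F} {R : ℝ}
    (hf : IsLocalHomeomorphOn f (ball c R))
    (hconv : ∀ r, 0 < r → r < R → Convex ℝ (f '' ball c r)) : InjOn f (ball c R) := by
  intro x hx y hy hxy
  by_contra hne
  -- Among the colliding pairs, take one whose larger distance `r` to `c` is minimal: then `f` is
  -- injective on `ball c r`, but not on its closure.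
  set ρ := max (dist x c) (dist y c)
  have hρ : closedBall c ρ ⊆ ball c R := closedBall_subset_ball (max_lt hx hy)
  obtain ⟨p, ⟨hpρ, hpne, hpf⟩, hpmin⟩ :=
    (isCompact_setOf_ne_image_eq (isCompact_closedBall c ρ) (hf.mono hρ)).exists_isMinOn
      ⟨(x, y), ⟨mem_closedBall.2 (le_max_left _ _), mem_closedBall.2 (le_max_right _ _)⟩,
        hne, hxy⟩
      (f := fun p => max (dist p.1 c) (dist p.2 c)) (by fun_prop)
  set r := max (dist p.1 c) (dist p.2 c)
  have hrρ : r ≤ ρ := max_le hpρ.1 hpρ.2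
  have hr : 0 < r := by
    refine (dist_nonneg.trans (le_max_left _ _)).lt_of_ne fun h0 => hpne ?_
    rw [dist_le_zero.1 ((le_max_left _ _).trans_eq h0.symm),
      dist_le_zero.1 ((le_max_right _ _).trans_eq h0.symm)]
  have hinj : InjOn f (ball c r) := by
    intro a ha b hb hab
    by_contra hne'
    have hsub : ball c r ⊆ closedBall c ρ :=
      ball_subset_closedBall.trans (closedBall_subset_closedBall hrρ)
    exact (max_lt ha hb).not_ge (isMinOn_iff.1 hpmin (a, b) ⟨⟨hsub ha, hsub hb⟩, hne', hab⟩)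
  have hcl := injOn_closure_of_convex_image isOpen_ball
    (hf.mono ((closure_ball_subset_closedBall.trans (closedBall_subset_closedBall hrρ)).trans hρ))
    hinj (hconv r hr (hrρ.trans_lt (max_lt hx hy)))
  rw [closure_ball c hr.ne'] at hcl
  exact hpne
    (hcl (mem_closedBall.2 (le_max_left _ _)) (mem_closedBall.2 (le_max_right _ _)) hpf)

end ConvexImage

lemma mul_add_conj_mul_injective {p q : ℂ} (hpq : ‖q‖ ≠ ‖p‖) :
    Function.Injective ((p • (1 : ℂ →L[ℝ] ℂ) +
      (conjCLE : ℂ →L[ℝ] ℂ).comp (q • (1 : ℂ →L[ℝ] ℂ))) : ℂ →ₗ[ℝ] ℂ) := by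
  rw [← LinearMap.ker_eq_bot, LinearMap.ker_eq_bot']
  intro v hv
  have hv' : p * v + conj (q * v) = 0 := by simpa using hv
  have hnorm : ‖p‖ * ‖v‖ = ‖q‖ * ‖v‖ := by
    rw [← norm_mul, ← norm_mul, eq_neg_of_add_eq_zero_left hv', norm_neg, RCLike.norm_conj]
  by_contra hne
  exact hpq (mul_right_cancel₀ (norm_ne_zero_iff.2 hne) hnorm).symm

lemma isLocalHomeomorphOn_add_conj {h g : ℂ → ℂ} {s : Set ℂ} (hh : AnalyticOnNhd ℂ h s)
    (hg : AnalyticOnNhd ℂ g s) (hJ : ∀ z ∈ s, ‖deriv g z‖ ≠ ‖deriv h z‖) :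
    IsLocalHomeomorphOn (fun z => h z + conj (g z)) s := by
  intro z hz
  have hderiv := (hh z hz).hasStrictDerivAt.complexToReal_fderiv.add
    ((conjCLE : ℂ →L[ℝ] ℂ).hasStrictFDerivAt.comp z (hg z hz).hasStrictDerivAt.complexToReal_fderiv)
  let L : ℂ ≃L[ℝ] ℂ := (LinearEquiv.ofInjectiveEndo _
    (mul_add_conj_mul_injective (hJ z hz))).toContinuousLinearEquiv
  have hL : HasStrictFDerivAt (fun z => h z + conj (g z)) (L : ℂ →L[ℝ] ℂ) z := hderiv
  exact ⟨hL.toOpenPartialHomeomorph _, hL.mem_toOpenPartialHomeomorph_source, rfl⟩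

lemma deriv_deriv_nonpos_of_isLocalMax {φ : ℝ → ℝ} {x : ℝ} (hmax : IsLocalMax φ x)
    (hφ : ContinuousAt φ x) : deriv (deriv φ) x ≤ 0 := by
  by_contra! hpos
  have hmin : IsLocalMin φ x := isLocalMin_of_deriv_deriv_pos hpos hmax.deriv_eq_zero hφ
  have hconst : φ =ᶠ[𝓝 x] fun _ => φ x := by
    filter_upwards [hmax, hmin] with t using le_antisymm
  simp [hconst.deriv.deriv_eq] at hpos

section BoundaryMax

variable {H : ℂ → ℂ} {w a : ℂ}

lemma re_mul_deriv_nonpos_of_isLocalMaxOn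
    (hmax : IsLocalMaxOn (fun z => (H z).re) (closedBall (w + a) ‖a‖) w)
    (hH : DifferentiableAt ℂ H w) : (a * deriv H w).re ≤ 0 := by
  have hderiv : HasFDerivAt (fun z => (H z).re) (reCLM.comp (deriv H w • (1 : ℂ →L[ℝ] ℂ))) w :=
    reCLM.hasFDerivAt.comp w hH.hasDerivAt.complexToReal_fderiv
  have hseg : segment ℝ w (w + a) ⊆ closedBall (w + a) ‖a‖ :=
    (convex_closedBall _ _).segment_subset (by simp) (by simp)
  simpa [mul_comm] using hmax.hasFDerivWithinAt_nonpos hderiv.hasFDerivWithinAt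
    (mem_posTangentConeAt_of_segment_subset hseg)

/-- Parametrization, starting at `w`, of the circle with centre `w + a` through `w`. Unlike
`circleMap`, it passes through the prescribed point `w` at parameter `0` for every direction of
`a`. -/
def arc (w a : ℂ) (θ : ℝ) : ℂ := w + a * (1 - exp (θ * I))

lemma arc_zero : arc w a 0 = w := by simp [arc]

lemma arc_mem_sphere (θ : ℝ) : arc w a θ ∈ sphere (w + a) ‖a‖ := by
  simp [arc, mul_sub, norm_exp_ofReal_mul_I]

lemma hasDerivAt_arc (θ : ℝ) : HasDerivAt (arc w a) (-(a * I) * exp (θ * I)) θ := by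
  have hexp : HasDerivAt (fun z : ℂ => exp (z * I)) (exp (θ * I) * (1 * I)) θ :=
    ((hasDerivAt_id' (θ : ℂ)).mul_const I).cexp
  exact (((hexp.const_sub 1).const_mul a).const_add w).comp_ofReal.congr_deriv (by ring)

lemma tendsto_arc : Tendsto (arc w a) (𝓝 0) (𝓝 w) := by
  simpa only [arc_zero] using (hasDerivAt_arc (w := w) (a := a) 0).continuousAt.tendsto

lemma eventually_hasDerivAt_comp_arc (hH : AnalyticAt ℂ H w) : ∀ᶠ θ in 𝓝 (0 : ℝ),
    HasDerivAt (fun θ => H (arc w a θ)) (deriv H (arc w a θ) * (-(a * I) * exp (θ * I))) θ := by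
  filter_upwards [tendsto_arc.eventually hH.eventually_analyticAt] with θ hθ
  exact hθ.differentiableAt.hasDerivAt.comp θ (hasDerivAt_arc θ)

lemma hasDerivAt_deriv_comp_arc (hH : AnalyticAt ℂ H w) :
    HasDerivAt (fun θ : ℝ => deriv H (arc w a θ) * (-(a * I) * exp (θ * I)))
      (a * deriv H w - a ^ 2 * deriv (deriv H) w) 0 := by
  have hH' : HasDerivAt (deriv H) (deriv (deriv H) w) (arc w a 0) := by
    rw [arc_zero]
    exact hH.deriv.differentiableAt.hasDerivAt
  have hexp : HasDerivAt (fun θ : ℝ => exp (θ * I)) I 0 := by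
    simpa using ((hasDerivAt_id' ((0 : ℝ) : ℂ)).mul_const I).cexp.comp_ofReal
  refine ((hH'.comp 0 (hasDerivAt_arc 0)).mul (hexp.const_mul (-(a * I)))).congr_deriv ?_
  rw [Function.comp_apply, arc_zero, ofReal_zero, zero_mul, exp_zero]
  linear_combination (a ^ 2 * deriv (deriv H) w - a * deriv H w) * I_sq

lemma im_eq_zero_and_re_le_of_isLocalMaxOn_sphere
    (hmax : IsLocalMaxOn (fun z => (H z).re) (sphere (w + a) ‖a‖) w) (hH : AnalyticAt ℂ H w) :
    (a * deriv H w).im = 0 ∧ (a * deriv H w).re ≤ (a ^ 2 * deriv (deriv H) w).re := by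
  have hφmax : IsLocalMax (fun θ => (H (arc w a θ)).re) 0 := by
    have htendsto : Tendsto (arc w a) (𝓝 0) (𝓝[sphere (w + a) ‖a‖] w) :=
      tendsto_nhdsWithin_iff.2 ⟨tendsto_arc, .of_forall arc_mem_sphere⟩
    simpa only [IsLocalMax, IsMaxFilter, arc_zero] using htendsto.eventually hmax
  have hφ' : ∀ᶠ θ in 𝓝 (0 : ℝ), HasDerivAt (fun θ => (H (arc w a θ)).re)
      (deriv H (arc w a θ) * (-(a * I) * exp (θ * I))).re θ :=
    (eventually_hasDerivAt_comp_arc hH).mono fun θ hθ => reCLM.hasFDerivAt.comp_hasDerivAt θ hθ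
  have hφ'' : deriv (deriv fun θ => (H (arc w a θ)).re) 0
      = (a * deriv H w - a ^ 2 * deriv (deriv H) w).re := by
    have hderiv : deriv (fun θ => (H (arc w a θ)).re) =ᶠ[𝓝 0]
        fun θ => (deriv H (arc w a θ) * (-(a * I) * exp (θ * I))).re :=
      hφ'.mono fun θ hθ => hθ.deriv
    rw [hderiv.deriv_eq]
    exact (reCLM.hasFDerivAt.comp_hasDerivAt 0 (hasDerivAt_deriv_comp_arc hH)).deriv
  have hfirst := hφmax.hasDerivAt_eq_zero hφ'.self_of_nhds
  have hsecond := deriv_deriv_nonpos_of_isLocalMax hφmax hφ'.self_of_nhds.continuousAt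
  constructor
  · simpa [arc_zero, mul_comm, add_comm] using hfirst
  · rw [hφ'', sub_re] at hsecond
    linarith

end BoundaryMax

lemma exists_re_mul_lt_of_convex {s : Set ℂ} (hs : Convex ℝ s) (hopen : IsOpen s) {p : ℂ}
    (hp : p ∉ s) : ∃ m : ℂ, ∀ z ∈ s, (m * z).re < (m * p).re := by
  obtain ⟨l, hl⟩ := geometric_hahn_banach_open_point hs hopen hp
  obtain ⟨m, rfl⟩ := (InnerProductSpace.toDual ℝ ℂ).surjective l
  exact ⟨conj m, by simpa [Complex.inner, mul_comm] using hl⟩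

lemma eventuallyEq_deriv_const_mul_add_const_mul {h g : ℂ → ℂ} {w : ℂ} (hh : AnalyticAt ℂ h w)
    (hg : AnalyticAt ℂ g w) (m n : ℂ) :
    deriv (fun z => m * h z + n * g z) =ᶠ[𝓝 w] fun z => m * deriv h z + n * deriv g z := by
  filter_upwards [hh.eventually_analyticAt, hg.eventually_analyticAt] with z hhz hgz
  exact ((hhz.differentiableAt.hasDerivAt.const_mul m).add
    (hgz.differentiableAt.hasDerivAt.const_mul n)).deriv

lemma deriv_deriv_const_mul_add_const_mul {h g : ℂ → ℂ} {w : ℂ} (hh : AnalyticAt ℂ h w)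
    (hg : AnalyticAt ℂ g w) (m n : ℂ) :
    deriv (deriv fun z => m * h z + n * g z) w
      = m * deriv (deriv h) w + n * deriv (deriv g) w :=
  (eventuallyEq_deriv_const_mul_add_const_mul hh hg m n).deriv_eq.trans
    (eventuallyEq_deriv_const_mul_add_const_mul hh.deriv hg.deriv m n).eq_of_nhds

lemma exists_isMaxOn_re_of_convex_image {X : Type*} [TopologicalSpace X] {h g : X → ℂ} {s : Set X}
    {w : X} (hs : s.Nonempty) (hh : ContinuousOn h (closure s)) (hg : ContinuousOn g (closure s))
    (hopen : IsOpen ((fun z => h z + conj (g z)) '' s))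
    (hconv : Convex ℝ ((fun z => h z + conj (g z)) '' s))
    (hw : h w + conj (g w) ∉ (fun z => h z + conj (g z)) '' s) :
    ∃ m : ℂ, m ≠ 0 ∧ IsMaxOn (fun z => (m * h z + conj m * g z).re) (closure s) w := by
  obtain ⟨m, hm⟩ := exists_re_mul_lt_of_convex hconv hopen hw
  have hre : ∀ z, (m * h z + conj m * g z).re = (m * (h z + conj (g z))).re := fun z => by
    simp only [mul_add, add_re, mul_re, conj_re, conj_im]
    ring
  refine ⟨m, ?_, IsMaxOn.closure (isMaxOn_iff.2 fun z hz => ?_) ?_⟩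
  · rintro rfl
    obtain ⟨z, hz⟩ := hs
    simpa only [zero_mul, lt_irrefl] using hm _ (mem_image_of_mem _ hz)
  · rw [hre, hre]
    exact (hm _ (mem_image_of_mem _ hz)).le
  · exact continuous_re.comp_continuousOn
      ((continuousOn_const.mul hh).add (continuousOn_const.mul hg))

lemma re_le_one_of_re_mul_le {a m u v : ℂ} (ham : a * m ≠ 0) (him : (a * m).im = 0)
    (hnonpos : (a * m).re ≤ 0) (hle : (a * m).re ≤ (a ^ 2 * (m * u + conj m * v)).re) :
    (a * u + a ^ 2 / conj a * v).re ≤ 1 := by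
  have hreal : a * m = ((a * m).re : ℂ) := Complex.ext rfl him
  have hreal_conj : conj a * conj m = ((a * m).re : ℂ) := by
    rw [← map_mul, hreal, conj_ofReal, ofReal_re]
  have hneg : (a * m).re < 0 :=
    hnonpos.lt_of_ne fun hzero => ham (by rw [hreal, hzero, ofReal_zero])
  have hca : conj a ≠ 0 := (map_ne_zero _).2 (left_ne_zero_of_mul ham)
  have hfactor : a ^ 2 * (m * u + conj m * v)
      = (a * m).re * (a * u + a ^ 2 / conj a * v) := by
    rw [mul_add, mul_add]
    congr 1
    · rw [← hreal]; ring
    · rw [← hreal_conj]; field_simp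
  rw [hfactor, re_ofReal_mul] at hle
  exact (mul_le_mul_left_of_neg hneg).1 (by rwa [mul_one])

lemma re_deriv_deriv_le_one_of_convex_image {h g : ℂ → ℂ} {w a : ℂ} (ha : a ≠ 0)
    (hh : AnalyticOnNhd ℂ h (closedBall (w + a) ‖a‖))
    (hg : AnalyticOnNhd ℂ g (closedBall (w + a) ‖a‖))
    (hh' : deriv h w = 1) (hg' : deriv g w = 0)
    (hopen : IsOpen ((fun z => h z + conj (g z)) '' ball (w + a) ‖a‖))
    (hconv : Convex ℝ ((fun z => h z + conj (g z)) '' ball (w + a) ‖a‖))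
    (hnotMem : h w + conj (g w) ∉ (fun z => h z + conj (g z)) '' ball (w + a) ‖a‖) :
    (a * deriv (deriv h) w + a ^ 2 / conj a * deriv (deriv g) w).re ≤ 1 := by
  have hclosure := closure_ball (w + a) (norm_ne_zero_iff.2 ha)
  obtain ⟨m, hm, hmax⟩ := exists_isMaxOn_re_of_convex_image
    (nonempty_ball.2 (norm_pos_iff.2 ha)) (hclosure ▸ hh.continuousOn)
    (hclosure ▸ hg.continuousOn) hopen hconv hnotMem
  rw [hclosure] at hmax
  have hw : w ∈ closedBall (w + a) ‖a‖ := by simp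
  have hH : AnalyticAt ℂ (fun z => m * h z + conj m * g z) w :=
    (analyticAt_const.mul (hh w hw)).add (analyticAt_const.mul (hg w hw))
  have hH' : deriv (fun z => m * h z + conj m * g z) w = m := by
    rw [(eventuallyEq_deriv_const_mul_add_const_mul (hh w hw) (hg w hw) m (conj m)).eq_of_nhds,
      hh', hg', mul_one, mul_zero, add_zero]
  have hnonpos := re_mul_deriv_nonpos_of_isLocalMaxOn hmax.localize hH.differentiableAt
  obtain ⟨him, hle⟩ := im_eq_zero_and_re_le_of_isLocalMaxOn_sphere
    (hmax.on_subset sphere_subset_closedBall).localize hH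
  rw [deriv_deriv_const_mul_add_const_mul (hh w hw) (hg w hw)] at hle
  rw [hH'] at him hle hnonpos
  exact re_le_one_of_re_mul_le (mul_ne_zero ha hm) him hnonpos hle

lemma sqrt_three_mul_norm_le_of_forall_re_le {A B : ℂ} {C : ℝ}
    (hC : ∀ w : ℂ, ‖w‖ = 1 → (A * w + B * w ^ 3).re ≤ C) : √3 * ‖A‖ ≤ 2 * C := by
  obtain ⟨u, hu, hAu⟩ := A.exists_norm_eq_mul_self
  -- `ω = exp (iπ/6)` satisfies `ω ^ 3 = I`, so the `B`-terms at `u * ω` and `u * conj ω` cancel.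
  let ω : ℂ := exp ((Real.pi / 6 : ℝ) * I)
  have hω : ‖ω‖ = 1 := norm_exp_ofReal_mul_I _
  have hω_add_conj : ω + conj ω = √3 := by
    rw [add_conj, exp_ofReal_mul_I_re, Real.cos_pi_div_six, mul_div_cancel₀ _ two_ne_zero]
  have hω3 : ω ^ 3 = I := by
    have harg : ((3 : ℕ) : ℂ) * ((Real.pi / 6 : ℝ) * I) = Real.pi / 2 * I := by
      push_cast
      ring
    rw [← exp_nat_mul, harg, exp_pi_div_two_mul_I]
  have hconjω3 : conj ω ^ 3 = -I := by rw [← map_pow, hω3, conj_I]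
  have hsum : A * (u * ω) + B * (u * ω) ^ 3 + (A * (u * conj ω) + B * (u * conj ω) ^ 3)
      = (√3 * ‖A‖ : ℝ) := by
    rw [ofReal_mul, hAu, mul_pow, mul_pow, hω3, hconjω3]
    linear_combination A * u * hω_add_conj
  have hplus := hC (u * ω) (by rw [norm_mul, hu, hω, one_mul])
  have hminus := hC (u * conj ω) (by rw [norm_mul, hu, RCLike.norm_conj, hω, one_mul])
  calc √3 * ‖A‖ = _ := by rw [← ofReal_re (√3 * ‖A‖), ← hsum, add_re]
    _ ≤ 2 * C := by linarith

lemma sqrt_three_mul_norm_le_two_div_of_forall_re_le_one {A B : ℂ} {R : ℝ} (hR : 0 < R)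
    (hAB : ∀ a : ℂ, a ≠ 0 → ‖a‖ < R → (a * A + a ^ 2 / conj a * B).re ≤ 1) :
    √3 * ‖A‖ ≤ 2 / R := by
  refine le_of_forall_gt_imp_ge_of_dense fun y hy => ?_
  have hy0 : 0 < y := (by positivity : 0 < 2 / R).trans hy
  suffices ∀ w : ℂ, ‖w‖ = 1 → (A * w + B * w ^ 3).re ≤ y / 2 by
    linarith [sqrt_three_mul_norm_le_of_forall_re_le this]
  intro w hw
  have hw0 : w ≠ 0 := norm_ne_zero_iff.1 (hw.trans_ne one_ne_zero)
  let a : ℂ := (2 / y : ℝ) * w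
  have ha : a ≠ 0 := mul_ne_zero (ofReal_ne_zero.2 (by positivity)) hw0
  have hnorm : ‖a‖ = 2 / y := by
    rw [norm_mul, hw, mul_one, norm_real, Real.norm_of_nonneg (by positivity)]
  have hsplit : a * A + a ^ 2 / conj a * B = (2 / y : ℝ) * (A * w + B * w ^ 3) := by
    have hy0' : ((2 / y : ℝ) : ℂ) ≠ 0 := ofReal_ne_zero.2 (by positivity)
    simp only [a, map_mul, conj_ofReal, ← inv_eq_conj hw]
    field_simp
  have hle := hAB a ha (by rwa [hnorm, div_lt_comm₀ hy0 hR])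
  rw [hsplit, re_ofReal_mul, div_mul_eq_mul_div, div_le_one hy0] at hle
  linarith

theorem AK0_second_coeff_bound_general (h g : ℂ → ℂ)
    (hh : DifferentiableOn ℂ h (ball (0 : ℂ) 1))
    (hg : DifferentiableOn ℂ g (ball (0 : ℂ) 1))
    (hjac : ∀ z ∈ ball (0 : ℂ) 1, ‖deriv g z‖ ≠ ‖deriv h z‖)
    (hd1 : deriv h 0 = 1) (gd1 : deriv g 0 = 0)
    (hconv_concentric : ∀ r : ℝ, 0 < r → r < 1 →
        Convex ℝ ((fun z => h z + conj (g z)) '' ball 0 r))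
    (hconv_tangent : ∀ a : ℂ, a ≠ 0 → ‖a‖ < 1 / 2 →
        Convex ℝ ((fun z => h z + conj (g z)) '' ball a ‖a‖)) :
    ‖deriv (deriv h) 0 / 2‖ ≤ 2 / √3 := by
  have hh_an : AnalyticOnNhd ℂ h (ball 0 1) := hh.analyticOnNhd isOpen_ball
  have hg_an : AnalyticOnNhd ℂ g (ball 0 1) := hg.analyticOnNhd isOpen_ball
  have hloc := isLocalHomeomorphOn_add_conj hh_an hg_an hjac
  have hinj := injOn_ball_of_convex_image hloc hconv_concentric
  have hbound : √3 * ‖deriv (deriv h) 0‖ ≤ 2 / (1 / 2) := by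
    refine sqrt_three_mul_norm_le_two_div_of_forall_re_le_one (B := deriv (deriv g) 0)
      one_half_pos fun a ha ha2 => ?_
    have hclosed : closedBall (0 + a) ‖a‖ ⊆ ball (0 : ℂ) 1 :=
      closedBall_subset_ball' (by rw [zero_add, dist_zero_right]; linarith)
    have hball := ball_subset_closedBall.trans hclosed
    have hnotMem : (0 : ℂ) ∉ ball (0 + a) ‖a‖ := by simp
    exact re_deriv_deriv_le_one_of_convex_image ha (hh_an.mono hclosed) (hg_an.mono hclosed) hd1 gd1
      (isOpen_image_of_isLocalHomeomorphOn isOpen_ball (hloc.mono hball))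
      (by simpa only [zero_add] using hconv_tangent a ha ha2)
      (mt (hinj.mem_image_iff hball (mem_ball_self one_pos)).1 hnotMem)
  rw [norm_div, RCLike.norm_ofNat, le_div_iff₀ (by positivity)]
  linarith

/-- If `f = h + conj g ∈ 𝒜𝒦⁰_H` (sense-preserving, normalized
`h(0) = g(0) = 0`, `h'(0) = 1`, `g'(0) = 0`, and `f(𝔻(a,r))` convex for all `a ∈ 𝔻`,
`0 < r < 1 - |a|`), then the second Taylor coefficient `a₂ = h''(0)/2` satisfies
`|a₂| ≤ 2/√3`. -/
theorem AK0_second_coeff_bound (h g : ℂ → ℂ)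
    (hh : DifferentiableOn ℂ h (ball (0:ℂ) 1))
    (hg : DifferentiableOn ℂ g (ball (0:ℂ) 1))
    (hsp : ∀ z ∈ ball (0:ℂ) 1, ‖deriv g z‖ < ‖deriv h z‖)
    (h0 : h 0 = 0) (g0 : g 0 = 0) (hd1 : deriv h 0 = 1) (gd1 : deriv g 0 = 0)
    (hconv : ∀ a ∈ ball (0:ℂ) 1, ∀ r : ℝ, 0 < r → r < 1 - ‖a‖ →
        Convex ℝ ((fun z => h z + conj (g z)) '' ball a r)) :
    ‖deriv (deriv h) 0 / 2‖ ≤ 2 / Real.sqrt 3 := by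
  exact AK0_second_coeff_bound_general h g hh hg (fun z hz => (hsp z hz).ne) hd1 gd1
    (fun r hr hr1 => hconv 0 (by simp) r hr (by simpa using hr1))
    (fun a ha ha2 => hconv a (by rw [mem_ball_zero_iff]; linarith) _ (norm_pos_iff.2 ha)
      (by linarith))
end
end

section
/- Every function f \in \mathcal{AK}^0_H satisfies, for 0 < |z| = r < 1, the growth inequalities (\sqrt{3}/(\sqrt{3}+4)) [1 - ((1-r)/(1+r))^{(\sqrt{3}+4)/(2\sqrt{3})}] \leq |f(z)| \leq (\sqrt{3}/(\sqrt{3}+4)) [((1+r)/(1-r))^{(\sqrt{3}+4)/(2\sqrt{3})} - 1]. -/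
open Complex Metric ComplexConjugate

noncomputable section

/-!
Let `z` lie on the bounding circle, with outer normal `e`, of a disc of radius `ρ` inside the unit
disc. The image of that disc under `f = h + conj g` is convex, so some linear functional `⟪c, f⟫` is
maximal over the disc at `z`. As `⟪c, f⟫` is the real part of the holomorphic function
`conj c * h + c * g`, the first-order condition at `z` fixes the direction of `c`, and the
second-order condition along the circle becomes `0 ≤ 1 + ρ Re (e P + e³ W)`, where `P = ∂ (log J)`,
`J` is the Jacobian, and `W` is the Wronskian of `h'` and `g'` divided by `J`. Letting `ρ` grow to
the largest admissible radius and averaging over two directions `e` with opposite cubes eliminates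
`W` and gives `|(1 - |z|²) P - 2 conj z| ≤ 4 / √3`.

Up to conjugation, `2 / (1 - |z|²)` times this quantity is the gradient of `log J + 2 log (1 -
|z|²)`, so integrating along a ray bounds `J`; together with the Schwarz lemma `|g'| ≤ |z| |h'|`
this bounds `|h'| ± |g'|`. The upper bound for `|f|` follows by integrating along a ray, the lower
one by integrating along the preimage of the segment from `0` to `f z`. That preimage is a curve
because `f` is univalent: otherwise take the largest centred disc on which `f` is injective. Two
boundary points with the same image share a supporting functional of the convex image of that disc,
so image points slightly inside would have two preimages in the disc.
-/

open Set Filter Topology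

open scoped InnerProductSpace

section GeneralLemmas

lemma second_deriv_nonpos_of_isLocalMax {f f' : ℝ → ℝ} {f'' x : ℝ} (hmax : IsLocalMax f x)
    (hf : ∀ᶠ y in 𝓝 x, HasDerivAt f (f' y) y) (hf' : HasDerivAt f' f'' x) : f'' ≤ 0 := by
  have hderiv : deriv f =ᶠ[𝓝 x] f' := hf.mono fun _ hy => hy.deriv
  have hderiv2 : deriv (deriv f) x = f'' := hderiv.deriv_eq.trans hf'.deriv
  by_contra! hpos
  have hmin : IsLocalMin f x := isLocalMin_of_deriv_deriv_pos (hderiv2.symm ▸ hpos)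
    hmax.deriv_eq_zero hf.self_of_nhds.continuousAt
  have hconst : f =ᶠ[𝓝 x] fun _ => f x := by
    filter_upwards [hmin, hmax] with y hle hge using le_antisymm hge hle
  have hzero : f'' = 0 := by simpa [hderiv2] using hconst.deriv.deriv_eq
  exact hpos.ne' hzero

lemma exists_inner_lt_of_convex_of_notMem {E : Type*} [NormedAddCommGroup E]
    [InnerProductSpace ℝ E] [CompleteSpace E] {s : Set E} (hs : Convex ℝ s) (hso : IsOpen s)
    {x : E} (hx : x ∉ s) : ∃ c : E, ∀ y ∈ s, ⟪c, y⟫_ℝ < ⟪c, x⟫_ℝ := by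
  obtain ⟨L, hL⟩ := geometric_hahn_banach_open_point hs hso hx
  exact ⟨(InnerProductSpace.toDual ℝ E).symm L, by
    simpa only [InnerProductSpace.toDual_symm_apply] using hL⟩

lemma norm_sub_smul_gradient_of_isMaxOn_closedBall {E : Type*} [NormedAddCommGroup E]
    [InnerProductSpace ℝ E] [CompleteSpace E] {f : E → ℝ} {a v z : E}
    (hmax : IsMaxOn f (closedBall a ‖z - a‖) z) (hf : HasGradientAt f v z) :
    ‖z - a‖ • v = ‖v‖ • (z - a) := by
  rcases eq_or_ne v 0 with rfl | hv
  · simp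
  have hv' : ‖v‖ ≠ 0 := norm_ne_zero_iff.2 hv
  set w : E := a + (‖z - a‖ / ‖v‖) • v with hw
  have hz : z ∈ closedBall a ‖z - a‖ := by simp [dist_eq_norm]
  have hwmem : w ∈ closedBall a ‖z - a‖ := by
    simp [hw, dist_eq_norm, norm_smul, div_mul_cancel₀ _ hv']
  have hle : ⟪v, w - z⟫_ℝ ≤ 0 := by
    simpa using hmax.localize.hasFDerivWithinAt_nonpos hf.hasFDerivAt.hasFDerivWithinAt
      (sub_mem_posTangentConeAt_of_segment_subset
        ((convex_closedBall a _).segment_subset hz hwmem))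
  have hinner : ⟪v, w - z⟫_ℝ = ‖v‖ * ‖z - a‖ - ⟪v, z - a⟫_ℝ := by
    have hsplit : w - z = (‖z - a‖ / ‖v‖) • v - (z - a) := by rw [hw]; abel
    rw [hsplit, inner_sub_right, real_inner_smul_right, real_inner_self_eq_norm_sq]
    field_simp
  exact inner_eq_norm_mul_iff_real.1
    (le_antisymm (real_inner_le_norm v (z - a)) (by linarith))

lemma eventually_mem_ball_of_inner_deriv_neg {E : Type*} [NormedAddCommGroup E]
    [InnerProductSpace ℝ E] {γ : ℝ → E} {a v : E} {t : ℝ} (hγ : HasDerivAt γ v t)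
    (hv : ⟪γ t - a, v⟫_ℝ < 0) : ∀ᶠ s in 𝓝[>] t, γ s ∈ ball a ‖γ t - a‖ := by
  have hslope := (hasDerivWithinAt_iff_tendsto_slope' (s := Ioi t) (by simp)).1
    (hγ.sub_const a).norm_sq.hasDerivWithinAt
  filter_upwards [hslope.eventually_lt_const (by linarith : 2 * ⟪γ t - a, v⟫_ℝ < 0),
    self_mem_nhdsWithin] with s hs hts
  rw [slope_neg_iff_of_le (mem_Ioi.1 hts).le] at hs
  rw [mem_ball_iff_norm]
  exact lt_of_pow_lt_pow_left₀ 2 (norm_nonneg _) hs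

lemma exists_hasDerivAt_lift {𝕜 E F : Type*} [NontriviallyNormedField 𝕜] [NormedAddCommGroup E]
    [NormedSpace 𝕜 E] [CompleteSpace E] [NormedAddCommGroup F] [NormedSpace 𝕜 F] {f : E → F}
    {e : E ≃L[𝕜] F} {y : E} (hf : HasStrictFDerivAt f (e : E →L[𝕜] F) y) {w : 𝕜 → F} {w' : F}
    {t : 𝕜} (hw : HasDerivAt w w' t) (hwt : w t = f y) :
    ∃ η : 𝕜 → E, η t = y ∧ HasDerivAt η (e.symm w') t ∧ ∀ᶠ s in 𝓝 t, f (η s) = w s := by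
  refine ⟨hf.localInverse f e y ∘ w, by simp [hwt], ?_, ?_⟩
  · exact (hwt ▸ hf.to_localInverse.hasFDerivAt).comp_hasDerivAt t hw
  · exact (hwt ▸ hw.continuousAt.tendsto).eventually hf.eventually_right_inverse

lemma hasDerivAt_invFunOn_comp {𝕜 E F : Type*} [NontriviallyNormedField 𝕜]
    [NormedAddCommGroup E] [NormedSpace 𝕜 E] [CompleteSpace E] [NormedAddCommGroup F]
    [NormedSpace 𝕜 F] {f : E → F} {e : E ≃L[𝕜] F} {y : E} {s : Set E}
    (hf : HasStrictFDerivAt f (e : E →L[𝕜] F) y) (hs : s ∈ 𝓝 y) (hinj : InjOn f s) {w : 𝕜 → F}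
    {w' : F} {t : 𝕜} (hw : HasDerivAt w w' t) (hwt : w t = f y) :
    HasDerivAt (fun τ => Function.invFunOn f s (w τ)) (e.symm w') t := by
  obtain ⟨η, hηt, hη, hlift⟩ := exists_hasDerivAt_lift hf hw hwt
  refine hη.congr_of_eventuallyEq ?_
  filter_upwards [hlift, hη.continuousAt.eventually_mem (hηt ▸ hs)] with τ hτ hmem
  rw [← hτ, hinj.leftInvOn_invFunOn hmem]

lemma eq_of_injOn_of_mem_closure {X Y : Type*} [TopologicalSpace X] [T2Space X]
    [TopologicalSpace Y] {f : X → Y} {s : Set X} {p x : X} (hinj : InjOn f s) (hs : s ∈ 𝓝 p)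
    (hopen : 𝓝 (f p) ≤ map f (𝓝 p)) (hx : x ∈ closure s) (hcont : ContinuousAt f x)
    (hfx : f x = f p) : x = p := by
  by_contra hne
  obtain ⟨V, U, hV, hU, hVU⟩ := t2_separation_nhds hne
  have himage : f '' (U ∩ s) ∈ 𝓝 (f x) := hfx ▸ hopen (image_mem_map (inter_mem hU hs))
  obtain ⟨y, ⟨hyV, y', ⟨hy'U, hy's⟩, hy'⟩, hys⟩ :=
    mem_closure_iff_nhds.1 hx _ (inter_mem hV (hcont.preimage_mem_nhds himage))
  exact disjoint_left.1 hVU hyV (hinj hy's hys hy' ▸ hy'U)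

lemma injOn_ball_of_injOn_closedBall {E F : Type*} [NormedAddCommGroup E] [NormedSpace ℝ E]
    [ProperSpace E] [TopologicalSpace F] [T2Space F] {f : E → F} {a : E} {R : ℝ}
    (hcont : ContinuousOn f (ball a R)) (hloc : ∀ z ∈ ball a R, ∃ U ∈ 𝓝 z, InjOn f U)
    (hstep : ∀ r, 0 < r → r < R → InjOn f (ball a r) → InjOn f (closedBall a r)) :
    InjOn f (ball a R) := by
  have hclosed : ∀ ρ < R, Icc 0 ρ ⊆ {r | InjOn f (closedBall a r)} := by
    intro ρ hρ
    refine IsClosed.Icc_subset_of_forall_exists_gt ?_ (by simp) ?_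
    · refine isClosed_of_closure_subset fun r hr => ?_
      have hr' : r ∈ Icc 0 ρ := isClosed_Icc.closure_subset_iff.2 inter_subset_right hr
      refine ⟨?_, hr'⟩
      rcases hr'.1.eq_or_lt with rfl | hpos
      · simp
      refine hstep r hpos (hr'.2.trans_lt hρ) fun x hx y hy hxy => ?_
      obtain ⟨k, hk, hkinj, -⟩ :=
        mem_closure_iff_nhds.1 hr _ (Ioi_mem_nhds (max_lt hx hy))
      exact hkinj (mem_closedBall.2 ((le_max_left _ _).trans hk.le))
        (mem_closedBall.2 ((le_max_right _ _).trans hk.le)) hxy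
    · rintro r ⟨hr, hr0, hrρ⟩ s hs
      have hsub : closedBall a r ⊆ ball a R := closedBall_subset_ball (hrρ.trans hρ)
      obtain ⟨t, ht, htinj⟩ := hr.exists_mem_nhdsSet (isCompact_closedBall a r)
        (fun x hx => hcont.continuousAt (isOpen_ball.mem_nhds (hsub hx)))
        fun x hx => hloc x (hsub hx)
      obtain ⟨δ, hδ, hδt⟩ := (hasBasis_nhdsSet_thickening (isCompact_closedBall a r)).mem_iff.1 ht
      rw [thickening_closedBall hδ hr0] at hδt
      obtain ⟨k, hrk, hk⟩ := exists_between (lt_min hs (lt_add_of_pos_left r hδ))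
      exact ⟨k, htinj.mono ((closedBall_subset_ball (hk.trans_le (min_le_right _ _))).trans hδt),
        hrk, hk.le.trans (min_le_left _ _)⟩
  intro x hx y hy hxy
  exact hclosed _ (max_lt hx hy) ⟨dist_nonneg.trans (le_max_left _ _), le_rfl⟩
    (mem_closedBall.2 (le_max_left _ _)) (mem_closedBall.2 (le_max_right _ _)) hxy

variable {φ φ' : ℝ → ℝ} {R : ℝ}

lemma norm_image_le_of_norm_fderiv_le {E F : Type*} [NormedAddCommGroup E] [NormedSpace ℝ E]
    [NormedAddCommGroup F] [NormedSpace ℝ F] {f : E → F} {f' : E → E →L[ℝ] F}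
    (hf : ∀ z ∈ ball 0 R, HasFDerivAt f (f' z) z) (hφ : ∀ t ∈ Ico 0 R, HasDerivAt φ (φ' t) t)
    (hzero : ‖f 0‖ ≤ φ 0) (hbound : ∀ z ∈ ball 0 R, ‖f' z‖ ≤ φ' ‖z‖) {x : E}
    (hx : x ∈ ball 0 R) : ‖f x‖ ≤ φ ‖x‖ := by
  have hmem : ∀ t ∈ Icc (0 : ℝ) 1, t • x ∈ ball 0 R ∧ ‖t • x‖ = t * ‖x‖ := by
    intro t ht
    have hnorm : ‖t • x‖ = t * ‖x‖ := by rw [norm_smul, Real.norm_of_nonneg ht.1]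
    rw [mem_ball_zero_iff, hnorm]
    exact ⟨(mul_le_of_le_one_left (norm_nonneg x) ht.2).trans_lt (mem_ball_zero_iff.1 hx), rfl⟩
  have hray : ∀ t ∈ Icc (0 : ℝ) 1, HasDerivAt (fun s : ℝ => f (s • x)) (f' (t • x) x) t := by
    intro t ht
    exact (hf _ (hmem t ht).1).comp_hasDerivAt t
      (by simpa using (hasDerivAt_id t).smul_const x)
  have hφray : ∀ t ∈ Icc (0 : ℝ) 1,
      HasDerivAt (fun s => φ (s * ‖x‖)) (φ' (t * ‖x‖) * ‖x‖) t := by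
    intro t ht
    obtain ⟨htR, htx⟩ := hmem t ht
    rw [mem_ball_zero_iff, htx] at htR
    exact (hφ _ ⟨mul_nonneg ht.1 (norm_nonneg x), htR⟩).comp t (hasDerivAt_mul_const ‖x‖)
  simpa using image_norm_le_of_norm_deriv_right_le_deriv_boundary'
    (fun t ht => (hray t ht).continuousAt.continuousWithinAt)
    (fun t ht => (hray t (Ico_subset_Icc_self ht)).hasDerivWithinAt) (by simpa using hzero)
    (fun t ht => (hφray t ht).continuousAt.continuousWithinAt)
    (fun t ht => (hφray t (Ico_subset_Icc_self ht)).hasDerivWithinAt)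
    (fun t ht => by
      obtain ⟨htR, htx⟩ := hmem t (Ico_subset_Icc_self ht)
      exact (f' (t • x)).le_of_opNorm_le (htx ▸ hbound _ htR) x)
    (right_mem_Icc.2 zero_le_one)

lemma comp_norm_sub_le_mul_sub {E : Type*} [NormedAddCommGroup E] [InnerProductSpace ℝ E]
    {γ : ℝ → E} {a b C : ℝ} (hab : a ≤ b) (hγ : ∀ t ∈ Icc a b, DifferentiableAt ℝ γ t)
    (hne : ∀ t ∈ Ioo a b, γ t ≠ 0) (hφ : ∀ t ∈ Icc a b, HasDerivAt φ (φ' ‖γ t‖) ‖γ t‖)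
    (hφ' : ∀ t ∈ Icc a b, 0 ≤ φ' ‖γ t‖) (hbound : ∀ t ∈ Icc a b, φ' ‖γ t‖ * ‖deriv γ t‖ ≤ C) :
    φ ‖γ b‖ - φ ‖γ a‖ ≤ C * (b - a) := by
  have hcont : ContinuousOn (fun s => φ ‖γ s‖) (Icc a b) := fun t ht =>
    (ContinuousAt.comp (f := fun s => ‖γ s‖) (hφ t ht).continuousAt
      (hγ t ht).continuousAt.norm).continuousWithinAt
  have hderiv : ∀ t ∈ interior (Icc a b), ∃ d ≤ C, HasDerivAt (fun s => φ ‖γ s‖) d t := by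
    rw [interior_Icc]
    intro t ht
    have htI : t ∈ Icc a b := Ioo_subset_Icc_self ht
    have hnorm := (differentiableAt_id.norm ℝ (hne t ht)).hasFDerivAt.comp_hasDerivAt t
      (hγ t htI).hasDerivAt
    refine ⟨_, ?_, (hφ t htI).comp t hnorm⟩
    refine (mul_le_mul_of_nonneg_left ((Real.le_norm_self _).trans ?_) (hφ' t htI)).trans
      (hbound t htI)
    simpa using (fderiv ℝ (fun y : E => ‖id y‖) (γ t)).le_of_opNorm_le
      (norm_fderiv_le_of_lipschitz ℝ lipschitzWith_one_norm) (deriv γ t)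
  exact (convex_Icc a b).image_sub_le_mul_sub_of_deriv_le hcont
    (fun t ht => let ⟨_, _, hd⟩ := hderiv t ht; hd.differentiableAt.differentiableWithinAt)
    (fun t ht => let ⟨_, hle, hd⟩ := hderiv t ht; hd.deriv.trans_le hle)
    a (left_mem_Icc.2 hab) b (right_mem_Icc.2 hab) hab

lemma le_norm_image_of_le_norm_fderiv {E F : Type*} [NormedAddCommGroup E]
    [InnerProductSpace ℝ E] [CompleteSpace E] [NormedAddCommGroup F] [NormedSpace ℝ F]
    {f : E → F} (hf : ∀ z ∈ ball 0 R, ∃ e : E ≃L[ℝ] F,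
      HasStrictFDerivAt f (e : E →L[ℝ] F) z ∧ ∀ v, φ' ‖z‖ * ‖v‖ ≤ ‖e v‖)
    (hinj : InjOn f (ball 0 R)) (hf0 : f 0 = 0)
    (hφ : ∀ t ∈ Ico 0 R, HasDerivAt φ (φ' t) t) (hφ0 : φ 0 = 0)
    (hφ' : ∀ t ∈ Ico 0 R, 0 ≤ φ' t) {x : E} (hx : x ∈ ball 0 R)
    (hseg : segment ℝ 0 (f x) ⊆ f '' ball 0 R) : φ ‖x‖ ≤ ‖f x‖ := by
  have h0R : (0 : E) ∈ ball 0 R := mem_ball_self (pos_of_mem_ball hx)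
  rcases eq_or_ne x 0 with rfl | hx0
  · simp [hφ0]
  have hfx : f x ≠ 0 := fun h => hx0 (hinj hx h0R (h.trans hf0.symm))
  set γ : ℝ → E := fun t => Function.invFunOn f (ball 0 R) (t • f x) with hγdef
  have himage : ∀ t ∈ Icc (0 : ℝ) 1, t • f x ∈ f '' ball 0 R := fun t ht =>
    hseg (by rw [segment_eq_image]; exact ⟨t, ht, by simp⟩)
  have hγmem : ∀ t ∈ Icc (0 : ℝ) 1, γ t ∈ ball 0 R := fun t ht =>
    Function.invFunOn_mem (himage t ht)
  have hfγ : ∀ t ∈ Icc (0 : ℝ) 1, f (γ t) = t • f x := fun t ht =>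
    Function.invFunOn_eq (himage t ht)
  choose e he hbound using hf
  have hγ : ∀ t (ht : t ∈ Icc (0 : ℝ) 1),
      HasDerivAt γ ((e (γ t) (hγmem t ht)).symm (f x)) t := fun t ht =>
    hasDerivAt_invFunOn_comp (he _ (hγmem t ht)) (isOpen_ball.mem_nhds (hγmem t ht)) hinj
      (by simpa using (hasDerivAt_id t).smul_const (f x)) (hfγ t ht).symm
  have hnorm : ∀ t ∈ Icc (0 : ℝ) 1, ‖γ t‖ ∈ Ico 0 R := fun t ht =>
    ⟨norm_nonneg _, mem_ball_zero_iff.1 (hγmem t ht)⟩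
  have hγ0 : γ 0 = 0 := by simpa [hγdef, hf0] using hinj.leftInvOn_invFunOn h0R
  have hγ1 : γ 1 = x := by simpa [hγdef] using hinj.leftInvOn_invFunOn hx
  simpa [hγ0, hγ1, hφ0] using comp_norm_sub_le_mul_sub zero_le_one
    (fun t ht => (hγ t ht).differentiableAt)
    (fun t ht h => smul_ne_zero ht.1.ne' hfx
      (by rw [← hfγ t (Ioo_subset_Icc_self ht), h, hf0]))
    (fun t ht => hφ _ (hnorm t ht)) (fun t ht => hφ' _ (hnorm t ht))
    (fun t ht => by
      simpa [(hγ t ht).deriv] using hbound _ (hγmem t ht) ((e _ (hγmem t ht)).symm (f x)))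

end GeneralLemmas

section ExtremalPoints

variable {F : ℂ → ℂ} {a z : ℂ}

lemma hasGradientAt_re {F' : ℂ} (hF : HasDerivAt F F' z) :
    HasGradientAt (fun w => (F w).re) (conj F') z := by
  rw [hasGradientAt_iff_hasFDerivAt]
  refine (reCLM.hasFDerivAt.comp z (hF.hasFDerivAt.restrictScalars ℝ)).congr_fderiv ?_
  ext v
  simp

lemma norm_sub_mul_conj_deriv_of_isMaxOn_re {F' : ℂ} (hF : HasDerivAt F F' z)
    (hmax : IsMaxOn (fun w => (F w).re) (closedBall a ‖z - a‖) z) :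
    ‖z - a‖ * conj F' = ‖F'‖ * (z - a) := by
  simpa using norm_sub_smul_gradient_of_isMaxOn_closedBall hmax (hasGradientAt_re hF)

lemma re_second_order_nonneg_of_isMaxOn_re (hF : AnalyticAt ℂ F z)
    (hmax : IsMaxOn (fun w => (F w).re) (closedBall a ‖z - a‖) z) :
    0 ≤ ((z - a) * deriv F z + (z - a) ^ 2 * deriv (deriv F) z).re := by
  set ζ := z - a with hζ
  set c : ℝ → ℂ := fun θ => a + ζ * cexp (θ * I) with hcdef
  have hc0 : c 0 = z := by simp [hcdef, hζ]
  have hcmem : ∀ θ, c θ ∈ closedBall a ‖ζ‖ := fun θ => by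
    simp [hcdef, dist_eq_norm, norm_exp_ofReal_mul_I]
  have hexp : ∀ θ : ℝ, HasDerivAt (fun θ : ℝ => ζ * cexp (θ * I)) (ζ * cexp (θ * I) * I) θ := by
    intro θ
    have := ((hasDerivAt_id θ).ofReal_comp.mul_const I).cexp.const_mul ζ
    simpa [mul_assoc] using this
  have hc : ∀ θ : ℝ, HasDerivAt c (ζ * cexp (θ * I) * I) θ := fun θ => (hexp θ).const_add a
  have hmax0 : IsLocalMax (fun θ => (F (c θ)).re) 0 := by
    filter_upwards with θ using by simpa [hc0] using hmax (hcmem θ)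
  have hfirst : ∀ᶠ θ in 𝓝 (0 : ℝ),
      HasDerivAt (fun θ => (F (c θ)).re) (deriv F (c θ) * (ζ * cexp (θ * I) * I)).re θ := by
    have hev := (hc 0).continuousAt.eventually (hc0.symm ▸ hF.eventually_analyticAt)
    filter_upwards [hev] with θ hθ
    exact reCLM.hasFDerivAt.comp_hasDerivAt θ (hθ.differentiableAt.hasDerivAt.comp θ (hc θ))
  have hsecond := reCLM.hasFDerivAt.comp_hasDerivAt (0 : ℝ)
    ((hc0.symm ▸ hF.deriv.differentiableAt.hasDerivAt).comp (0 : ℝ) (hc 0) |>.mul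
      ((hexp 0).mul_const I))
  have hnonpos := second_deriv_nonpos_of_isLocalMax hmax0 hfirst hsecond
  rw [← neg_nonpos, ← neg_re]
  convert hnonpos using 1
  simp only [reCLM_apply, Function.comp_apply, hc0, ofReal_zero, zero_mul, Complex.exp_zero,
    mul_one]
  congr 1
  linear_combination (-ζ * deriv F z - ζ ^ 2 * deriv (deriv F) z) * I_mul_I

end ExtremalPoints

section HarmonicMaps

/-- The real-linear map `v ↦ p v + conj (q v)`, the differential of a harmonic map whose analytic
and co-analytic parts have derivatives `p` and `q`. -/
def wirtingerCLM (p q : ℂ) : ℂ →L[ℝ] ℂ :=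
  ContinuousLinearMap.mul ℝ ℂ p +
    (conjCLE : ℂ →L[ℝ] ℂ) ∘L ContinuousLinearMap.mul ℝ ℂ q

@[simp]
lemma wirtingerCLM_apply (p q v : ℂ) : wirtingerCLM p q v = p * v + conj (q * v) := by
  simp [wirtingerCLM]

lemma norm_wirtingerCLM_le (p q : ℂ) : ‖wirtingerCLM p q‖ ≤ ‖p‖ + ‖q‖ := by
  refine ContinuousLinearMap.opNorm_le_bound _ (by positivity) fun v => ?_
  rw [wirtingerCLM_apply, add_mul, ← norm_mul, ← norm_mul, ← Complex.norm_conj (q * v)]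
  exact norm_add_le _ _

lemma sub_mul_norm_le_norm_wirtingerCLM (p q v : ℂ) :
    (‖p‖ - ‖q‖) * ‖v‖ ≤ ‖wirtingerCLM p q v‖ := by
  rw [wirtingerCLM_apply, sub_mul, ← norm_mul, ← norm_mul, ← Complex.norm_conj (q * v)]
  exact norm_sub_le_norm_add _ _

lemma wirtingerCLM_injective {p q : ℂ} (hpq : ‖q‖ < ‖p‖) :
    Function.Injective (wirtingerCLM p q) := by
  refine (injective_iff_map_eq_zero _).2 fun v hv => norm_le_zero_iff.1 ?_
  have hle := sub_mul_norm_le_norm_wirtingerCLM p q v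
  rw [hv, norm_zero] at hle
  exact nonpos_of_mul_nonpos_right hle (sub_pos.2 hpq)

/-- `wirtingerCLM p q` as a linear equivalence, in the sense-preserving case. -/
def wirtingerEquiv (p q : ℂ) (hpq : ‖q‖ < ‖p‖) : ℂ ≃L[ℝ] ℂ :=
  (LinearEquiv.ofInjectiveEndo (wirtingerCLM p q : ℂ →ₗ[ℝ] ℂ)
    (wirtingerCLM_injective hpq)).toContinuousLinearEquiv

@[simp]
lemma wirtingerEquiv_apply {p q : ℂ} (hpq : ‖q‖ < ‖p‖) (v : ℂ) :
    wirtingerEquiv p q hpq v = wirtingerCLM p q v := rfl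

/-- The planar harmonic map with analytic part `h` and co-analytic part `g`. -/
def harmonicMap (h g : ℂ → ℂ) (z : ℂ) : ℂ := h z + conj (g z)

/-- The function with real part `⟪c, h + conj g⟫`, holomorphic whenever `h` and `g` are; it reduces
extremal problems for linear functionals of a harmonic map to holomorphic ones. -/
def holomorphicSlice (h g : ℂ → ℂ) (c z : ℂ) : ℂ := conj c * h z + c * g z

variable {h g : ℂ → ℂ} {c z : ℂ} {U : Set ℂ}

lemma re_holomorphicSlice (h g : ℂ → ℂ) (c z : ℂ) :
    (holomorphicSlice h g c z).re = ⟪c, harmonicMap h g z⟫_ℝ := by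
  simp [holomorphicSlice, harmonicMap, Complex.inner]
  ring

lemma inner_wirtingerCLM (c p q v : ℂ) :
    ⟪c, wirtingerCLM p q v⟫_ℝ = ((conj c * p + c * q) * v).re := by
  simp [Complex.inner]
  ring

/-- `h + conj g` is a sense-preserving harmonic map on the open set `U`. -/
structure IsSensePreservingOn (h g : ℂ → ℂ) (U : Set ℂ) : Prop where
  isOpen : IsOpen U
  differentiableOn_left : DifferentiableOn ℂ h U
  differentiableOn_right : DifferentiableOn ℂ g U
  norm_deriv_lt : ∀ z ∈ U, ‖deriv g z‖ < ‖deriv h z‖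

namespace IsSensePreservingOn

lemma analyticAt_left (H : IsSensePreservingOn h g U) (hz : z ∈ U) : AnalyticAt ℂ h z :=
  H.differentiableOn_left.analyticAt (H.isOpen.mem_nhds hz)

lemma analyticAt_right (H : IsSensePreservingOn h g U) (hz : z ∈ U) : AnalyticAt ℂ g z :=
  H.differentiableOn_right.analyticAt (H.isOpen.mem_nhds hz)

lemma hasStrictFDerivAt (H : IsSensePreservingOn h g U) (hz : z ∈ U) :
    HasStrictFDerivAt (harmonicMap h g)
      (wirtingerEquiv (deriv h z) (deriv g z) (H.norm_deriv_lt z hz) : ℂ →L[ℝ] ℂ) z := by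
  have hh := (H.analyticAt_left hz).hasStrictFDerivAt.restrictScalars ℝ
  have hg := (H.analyticAt_right hz).hasStrictFDerivAt.restrictScalars ℝ
  refine (hh.add (conjCLE.toContinuousLinearMap.hasStrictFDerivAt.comp z hg)).congr_fderiv ?_
  ext v
  simp [fderiv_eq_smul_deriv, mul_comm]

lemma continuousAt (H : IsSensePreservingOn h g U) (hz : z ∈ U) :
    ContinuousAt (harmonicMap h g) z := (H.hasStrictFDerivAt hz).continuousAt

lemma continuousOn (H : IsSensePreservingOn h g U) : ContinuousOn (harmonicMap h g) U :=
  fun _ hz => (H.continuousAt hz).continuousWithinAt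

lemma map_nhds_eq (H : IsSensePreservingOn h g U) (hz : z ∈ U) :
    map (harmonicMap h g) (𝓝 z) = 𝓝 (harmonicMap h g z) :=
  (H.hasStrictFDerivAt hz).map_nhds_eq_of_equiv

lemma isOpen_image (H : IsSensePreservingOn h g U) {V : Set ℂ} (hV : IsOpen V) (hVU : V ⊆ U) :
    IsOpen (harmonicMap h g '' V) := by
  rw [isOpen_iff_mem_nhds]
  rintro _ ⟨z, hz, rfl⟩
  rw [← H.map_nhds_eq (hVU hz)]
  exact image_mem_map (hV.mem_nhds hz)

lemma exists_injOn_mem_nhds (H : IsSensePreservingOn h g U) (hz : z ∈ U) :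
    ∃ V ∈ 𝓝 z, InjOn (harmonicMap h g) V :=
  let Φ := (H.hasStrictFDerivAt hz).toOpenPartialHomeomorph _
  ⟨Φ.source, Φ.open_source.mem_nhds
    (H.hasStrictFDerivAt hz).mem_toOpenPartialHomeomorph_source, Φ.injOn⟩

lemma hasDerivAt_holomorphicSlice (H : IsSensePreservingOn h g U) (hz : z ∈ U) (c : ℂ) :
    HasDerivAt (holomorphicSlice h g c) (holomorphicSlice (deriv h) (deriv g) c z) z :=
  ((H.analyticAt_left hz).differentiableAt.hasDerivAt.const_mul _).add
    ((H.analyticAt_right hz).differentiableAt.hasDerivAt.const_mul _)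

lemma hasDerivAt_deriv_holomorphicSlice (H : IsSensePreservingOn h g U) (hz : z ∈ U) (c : ℂ) :
    HasDerivAt (deriv (holomorphicSlice h g c))
      (holomorphicSlice (deriv (deriv h)) (deriv (deriv g)) c z) z := by
  have hh := (H.analyticAt_left hz).deriv.differentiableAt.hasDerivAt
  have hg := (H.analyticAt_right hz).deriv.differentiableAt.hasDerivAt
  refine ((hh.const_mul _).add (hg.const_mul _)).congr_of_eventuallyEq ?_
  filter_upwards [H.isOpen.mem_nhds hz] with w hw
    using (H.hasDerivAt_holomorphicSlice hw c).deriv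

lemma analyticAt_holomorphicSlice (H : IsSensePreservingOn h g U) (hz : z ∈ U) (c : ℂ) :
    AnalyticAt ℂ (holomorphicSlice h g c) z :=
  (analyticAt_const.mul (H.analyticAt_left hz)).add (analyticAt_const.mul (H.analyticAt_right hz))

lemma deriv_holomorphicSlice_ne_zero (H : IsSensePreservingOn h g U) (hz : z ∈ U) (hc : c ≠ 0) :
    holomorphicSlice (deriv h) (deriv g) c z ≠ 0 := by
  have hlt : ‖c * deriv g z‖ < ‖conj c * deriv h z‖ := by
    rw [norm_mul, norm_mul, Complex.norm_conj]
    exact mul_lt_mul_of_pos_left (H.norm_deriv_lt z hz) (norm_pos_iff.2 hc)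
  intro h0
  rw [eq_neg_of_add_eq_zero_left h0, norm_neg] at hlt
  exact hlt.false

lemma exists_isMaxOn_inner (H : IsSensePreservingOn h g U) {a : ℂ} (hza : z ≠ a)
    (hsub : closedBall a ‖z - a‖ ⊆ U)
    (hconv : Convex ℝ (harmonicMap h g '' ball a ‖z - a‖))
    (hz : harmonicMap h g z ∉ harmonicMap h g '' ball a ‖z - a‖) :
    ∃ c ≠ 0, IsMaxOn (fun w => ⟪c, harmonicMap h g w⟫_ℝ) (closedBall a ‖z - a‖) z := by
  have hr : ‖z - a‖ ≠ 0 := norm_ne_zero_iff.2 (sub_ne_zero.2 hza)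
  obtain ⟨c, hc⟩ := exists_inner_lt_of_convex_of_notMem hconv
    (H.isOpen_image isOpen_ball (ball_subset_closedBall.trans hsub)) hz
  refine ⟨c, ?_, fun w hw => ?_⟩
  · rintro rfl
    simpa using hc _ (mem_image_of_mem _ (mem_ball_self (hr.symm.lt_of_le (norm_nonneg _))))
  · rw [← closure_ball a hr] at hw hsub
    exact le_on_closure (fun y hy => (hc _ (mem_image_of_mem _ hy)).le)
      (continuousOn_const.inner (H.continuousOn.mono hsub)) continuousOn_const hw

lemma norm_sub_mul_conj_slice_of_isMaxOn_inner (H : IsSensePreservingOn h g U) {a : ℂ}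
    (hz : z ∈ U)
    (hmax : IsMaxOn (fun w => ⟪c, harmonicMap h g w⟫_ℝ) (closedBall a ‖z - a‖) z) :
    ‖z - a‖ * conj (holomorphicSlice (deriv h) (deriv g) c z) =
      ‖holomorphicSlice (deriv h) (deriv g) c z‖ * (z - a) :=
  norm_sub_mul_conj_deriv_of_isMaxOn_re (H.hasDerivAt_holomorphicSlice hz c)
    (by simpa only [re_holomorphicSlice] using hmax)

lemma re_slice_second_order_nonneg_of_isMaxOn_inner (H : IsSensePreservingOn h g U) {a : ℂ}
    (hz : z ∈ U)
    (hmax : IsMaxOn (fun w => ⟪c, harmonicMap h g w⟫_ℝ) (closedBall a ‖z - a‖) z) :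
    0 ≤ ((z - a) * holomorphicSlice (deriv h) (deriv g) c z +
      (z - a) ^ 2 * holomorphicSlice (deriv (deriv h)) (deriv (deriv g)) c z).re := by
  rw [← (H.hasDerivAt_holomorphicSlice hz c).deriv,
    ← (H.hasDerivAt_deriv_holomorphicSlice hz c).deriv]
  exact re_second_order_nonneg_of_isMaxOn_re (H.analyticAt_holomorphicSlice hz c)
    (by simpa only [re_holomorphicSlice] using hmax)

lemma exists_inward_lift (H : IsSensePreservingOn h g U) {a : ℂ} (hz : z ∈ U) (hza : z ≠ a)
    (hc : c ≠ 0)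
    (hmax : IsMaxOn (fun w => ⟪c, harmonicMap h g w⟫_ℝ) (closedBall a ‖z - a‖) z) :
    ∃ γ : ℝ → ℂ, Tendsto γ (𝓝[>] 0) (𝓝 z) ∧ ∀ᶠ t in 𝓝[>] 0, γ t ∈ ball a ‖z - a‖ ∧
      harmonicMap h g (γ t) = harmonicMap h g z - t • c := by
  set e := wirtingerEquiv (deriv h z) (deriv g z) (H.norm_deriv_lt z hz)
  set D := holomorphicSlice (deriv h) (deriv g) c z with hD
  have hw : HasDerivAt (fun t : ℝ => harmonicMap h g z - t • c) (-c) 0 := by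
    simpa using ((hasDerivAt_id (0 : ℝ)).smul_const c).const_sub (harmonicMap h g z)
  obtain ⟨γ, hγ0, hγ, hlift⟩ := exists_hasDerivAt_lift (H.hasStrictFDerivAt hz) hw (by simp)
  have hDv : (D * e.symm (-c)).re = -‖c‖ ^ 2 := by
    rw [hD, holomorphicSlice, ← inner_wirtingerCLM, ← wirtingerEquiv_apply (H.norm_deriv_lt z hz),
      ContinuousLinearEquiv.apply_symm_apply, inner_neg_right, real_inner_self_eq_norm_sq]
  have hinner : ‖D‖ * ⟪z - a, e.symm (-c)⟫_ℝ = -(‖z - a‖ * ‖c‖ ^ 2) := by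
    have hnormal := congrArg conj (H.norm_sub_mul_conj_slice_of_isMaxOn_inner hz hmax)
    simp only [map_mul, conj_ofReal, conj_conj, ← hD] at hnormal
    rw [← mul_neg, ← hDv, ← re_ofReal_mul, ← mul_assoc, hnormal, Complex.inner, ← re_ofReal_mul]
    ring_nf
  have hneg : ⟪z - a, e.symm (-c)⟫_ℝ < 0 := by
    refine neg_of_mul_neg_right (a := ‖D‖) ?_ (norm_nonneg D)
    rw [hinner, neg_lt_zero]
    have := sub_ne_zero.2 hza
    positivity
  refine ⟨γ, hγ0 ▸ hγ.continuousAt.tendsto.mono_left nhdsWithin_le_nhds, ?_⟩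
  filter_upwards [eventually_mem_ball_of_inner_deriv_neg hγ (hγ0.symm ▸ hneg),
    hlift.filter_mono nhdsWithin_le_nhds] with t hmem ht using ⟨hγ0 ▸ hmem, ht⟩

lemma eq_of_eq_of_norm_sub_eq (H : IsSensePreservingOn h g U) {a x y : ℂ} (hxa : x ≠ a)
    (hxy : ‖y - a‖ = ‖x - a‖) (hsub : closedBall a ‖x - a‖ ⊆ U)
    (hinj : InjOn (harmonicMap h g) (ball a ‖x - a‖))
    (hconv : Convex ℝ (harmonicMap h g '' ball a ‖x - a‖))
    (hx : harmonicMap h g x ∉ harmonicMap h g '' ball a ‖x - a‖)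
    (hf : harmonicMap h g x = harmonicMap h g y) : x = y := by
  have hxU : x ∈ U := hsub (mem_closedBall_iff_norm.2 le_rfl)
  have hyU : y ∈ U := hsub (mem_closedBall_iff_norm.2 hxy.le)
  have hya : y ≠ a := norm_sub_pos_iff.1 (hxy ▸ norm_sub_pos_iff.2 hxa)
  obtain ⟨c, hc, hmax⟩ := H.exists_isMaxOn_inner hxa hsub hconv hx
  obtain ⟨γ, hγx, hγ⟩ := H.exists_inward_lift hxU hxa hc hmax
  obtain ⟨δ, hδy, hδ⟩ := H.exists_inward_lift hyU hya hc
    (by simpa only [hxy, isMaxOn_iff, hf] using hmax)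
  refine tendsto_nhds_unique_of_eventuallyEq hγx hδy ?_
  filter_upwards [hγ, hδ] with t ⟨hγt, hγf⟩ ⟨hδt, hδf⟩
  exact hinj hγt (hxy ▸ hδt) (by rw [hγf, hδf, hf])

lemma injOn_closedBall (H : IsSensePreservingOn h g U) {a : ℂ} {r : ℝ} (hr : 0 < r)
    (hsub : closedBall a r ⊆ U) (hinj : InjOn (harmonicMap h g) (ball a r))
    (hconv : Convex ℝ (harmonicMap h g '' ball a r)) :
    InjOn (harmonicMap h g) (closedBall a r) := by
  have hsphere : ∀ x ∈ sphere a r, harmonicMap h g x ∉ harmonicMap h g '' ball a r := by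
    rintro x hx ⟨p, hp, hpx⟩
    have hxcl : x ∈ closedBall a r := sphere_subset_closedBall hx
    have hxp : x = p := eq_of_injOn_of_mem_closure hinj (isOpen_ball.mem_nhds hp)
      (H.map_nhds_eq (hsub (ball_subset_closedBall hp))).ge (closure_ball a hr.ne' ▸ hxcl)
      (H.continuousAt (hsub hxcl)) hpx.symm
    exact sphere_disjoint_ball.le_bot ⟨hx, hxp ▸ hp⟩
  intro x hx y hy hxy
  rw [← ball_union_sphere] at hx hy
  rcases hx with hx | hx <;> rcases hy with hy | hy
  · exact hinj hx hy hxy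
  · exact absurd ⟨x, hx, hxy⟩ (hsphere y hy)
  · exact absurd ⟨y, hy, hxy.symm⟩ (hsphere x hx)
  · obtain rfl := mem_sphere_iff_norm.1 hx
    exact H.eq_of_eq_of_norm_sub_eq (norm_sub_pos_iff.1 hr) (mem_sphere_iff_norm.1 hy) hsub hinj
      hconv (hsphere x hx) hxy

theorem injOn_ball_of_convex_image {a : ℂ} {R : ℝ} (H : IsSensePreservingOn h g (ball a R))
    (hconv : ∀ r, 0 < r → r < R → Convex ℝ (harmonicMap h g '' ball a r)) :
    InjOn (harmonicMap h g) (ball a R) :=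
  injOn_ball_of_injOn_closedBall H.continuousOn (fun _ hz => H.exists_injOn_mem_nhds hz)
    fun r hr hrR hinj => H.injOn_closedBall hr (closedBall_subset_ball hrR) hinj (hconv r hr hrR)

end IsSensePreservingOn

end HarmonicMaps

section PreSchwarzian

lemma norm_sub_smul_add_lt_one {E : Type*} [NormedAddCommGroup E] [InnerProductSpace ℝ E]
    {z e : E} {ρ : ℝ} (he : ‖e‖ = 1) (hz : ‖z‖ < 1) (hρ : 2 * ρ * (1 - ⟪z, e⟫_ℝ) < 1 - ‖z‖ ^ 2) :
    ‖z - ρ • e‖ + ρ < 1 := by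
  have hle : ⟪z, e⟫_ℝ ≤ ‖z‖ := by simpa [he] using real_inner_le_norm z e
  have hρ1 : ρ < 1 := by
    by_contra! h
    nlinarith [norm_nonneg z]
  have hsq : ‖z - ρ • e‖ ^ 2 < (1 - ρ) ^ 2 := by
    rw [norm_sub_sq_real, real_inner_smul_right, norm_smul, he, mul_one, Real.norm_eq_abs, sq_abs]
    linarith
  linarith [lt_of_pow_lt_pow_left₀ 2 (sub_pos.2 hρ1).le hsq]

-- The cubes of the two directions `√3 / 2 ± I / 2` cancel, which removes `c`.
lemma norm_le_of_forall_re_add_cube_nonneg {a : ℝ} {b c : ℂ}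
    (h : ∀ e : ℂ, ‖e‖ = 1 → 0 ≤ a + (e * b + e ^ 3 * c).re) : ‖b‖ ≤ 2 / √3 * a := by
  obtain ⟨u, hu, hub⟩ := exists_norm_eq_mul_self b
  have hsqrt : √3 ^ 2 = 3 := Real.sq_sqrt (by norm_num)
  have hsqrtC : (√3 : ℂ) ^ 2 = 3 := mod_cast hsqrt
  have hnorm : ∀ ε : ℝ, ε ^ 2 = 1 → ‖-u * (√3 / 2 + ε / 2 * I)‖ = 1 := by
    intro ε hε
    rw [norm_mul, norm_neg, hu, one_mul, ← sq_eq_sq₀ (norm_nonneg _) zero_le_one,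
      ← normSq_eq_norm_sq, normSq_apply]
    simp
    linear_combination hsqrt / 4 + hε / 4
  have hplus := h _ (hnorm 1 (by norm_num))
  have hminus := h _ (hnorm (-1) (by norm_num))
  have hsum : (-u * (√3 / 2 + (1 : ℝ) / 2 * I) * b + (-u * (√3 / 2 + (1 : ℝ) / 2 * I)) ^ 3 * c) +
      (-u * (√3 / 2 + (-1 : ℝ) / 2 * I) * b + (-u * (√3 / 2 + (-1 : ℝ) / 2 * I)) ^ 3 * c) =
      ((-(√3 * ‖b‖) : ℝ) : ℂ) := by
    push_cast
    linear_combination √3 * hub - √3 / 4 * u ^ 3 * c * hsqrtC - 3 * √3 / 4 * u ^ 3 * c * I_sq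
  have hre := congrArg re hsum
  rw [add_re, ofReal_re] at hre
  rw [div_mul_eq_mul_div, le_div_iff₀ (by positivity)]
  linarith

lemma norm_sq_sub_norm_sq_mul_conj {c p q w : ℂ} (h : conj c * p + c * q = w) :
    ((‖p‖ ^ 2 - ‖q‖ ^ 2 : ℝ) : ℂ) * conj c = conj p * w - q * conj w := by
  subst h
  simp only [ofReal_sub, ofReal_pow, ← conj_mul', map_add, map_mul, conj_conj]
  ring

/-- The Jacobian determinant of the harmonic map `h + conj g`. -/
def jacobian (h g : ℂ → ℂ) (z : ℂ) : ℝ := ‖deriv h z‖ ^ 2 - ‖deriv g z‖ ^ 2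

/-- The pre-Schwarzian derivative `∂ (log J)` of the harmonic map `h + conj g`, where `J` is its
Jacobian. -/
def preSchwarzian (h g : ℂ → ℂ) (z : ℂ) : ℂ :=
  (conj (deriv h z) * deriv (deriv h) z - conj (deriv g z) * deriv (deriv g) z) / jacobian h g z

/-- The Wronskian of `h'` and `g'` divided by the Jacobian of `h + conj g`; it measures how far the
dilatation `g' / h'` is from being constant. -/
def normalizedWronskian (h g : ℂ → ℂ) (z : ℂ) : ℂ :=
  (deriv h z * deriv (deriv g) z - deriv g z * deriv (deriv h) z) / jacobian h g z

/-- Every disc compactly contained in the unit disc has a convex image under `f`. -/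
def HasConvexDiscImages (f : ℂ → ℂ) : Prop :=
  ∀ a ∈ ball (0 : ℂ) 1, ∀ r : ℝ, 0 < r → r < 1 - ‖a‖ → Convex ℝ (f '' ball a r)

variable {h g : ℂ → ℂ} {z : ℂ} {U : Set ℂ}

namespace IsSensePreservingOn

lemma jacobian_pos (H : IsSensePreservingOn h g U) (hz : z ∈ U) : 0 < jacobian h g z :=
  sub_pos.2 (pow_lt_pow_left₀ (H.norm_deriv_lt z hz) (norm_nonneg _) two_ne_zero)

lemma jacobian_mul_slice_deriv_deriv (H : IsSensePreservingOn h g U) (hz : z ∈ U) {c e : ℂ}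
    (he : ‖e‖ = 1) {m : ℝ} (hm : holomorphicSlice (deriv h) (deriv g) c z = m * conj e) :
    e ^ 2 * holomorphicSlice (deriv (deriv h)) (deriv (deriv g)) c z =
      m * (e * preSchwarzian h g z + e ^ 3 * normalizedWronskian h g z) := by
  have hJ : (jacobian h g z : ℂ) ≠ 0 := ofReal_ne_zero.2 (H.jacobian_pos hz).ne'
  have hee : conj e * e = 1 := by simp [conj_mul', he]
  have hconjc : (jacobian h g z : ℂ) * conj c = conj (deriv h z) * (m * conj e) -
      deriv g z * (m * e) := by
    simpa [jacobian] using norm_sq_sub_norm_sq_mul_conj hm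
  have hc := congrArg conj hconjc
  simp only [map_mul, map_sub, conj_conj, conj_ofReal] at hc
  rw [preSchwarzian, normalizedWronskian, holomorphicSlice]
  field_simp
  linear_combination e ^ 2 * deriv (deriv h) z * hconjc + e ^ 2 * deriv (deriv g) z * hc +
    m * e * (conj (deriv h z) * deriv (deriv h) z - conj (deriv g z) * deriv (deriv g) z) * hee

lemma re_preSchwarzian_nonneg_of_convex (H : IsSensePreservingOn h g U) {e : ℂ} (he : ‖e‖ = 1)
    {ρ : ℝ} (hρ : 0 < ρ) (hsub : closedBall (z - ρ • e) ρ ⊆ U)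
    (hinj : InjOn (harmonicMap h g) (closedBall (z - ρ • e) ρ))
    (hconv : Convex ℝ (harmonicMap h g '' ball (z - ρ • e) ρ)) :
    0 ≤ 1 + ρ * (e * preSchwarzian h g z + e ^ 3 * normalizedWronskian h g z).re := by
  set a := z - ρ • e with ha
  have hza : z - a = ρ • e := by rw [ha, sub_sub_cancel]
  have hnorm : ‖z - a‖ = ρ := by simp [hza, he, abs_of_pos hρ]
  have hne : z ≠ a := norm_sub_pos_iff.1 (hnorm.symm ▸ hρ)
  have hzcl : z ∈ closedBall a ρ := mem_closedBall_iff_norm.2 hnorm.le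
  have hout : harmonicMap h g z ∉ harmonicMap h g '' ball a ρ := by
    rintro ⟨y, hy, hyz⟩
    rw [hinj (ball_subset_closedBall hy) hzcl hyz, mem_ball_iff_norm, hnorm] at hy
    exact hy.false
  obtain ⟨c, hc, hmax⟩ := H.exists_isMaxOn_inner hne (hnorm.symm ▸ hsub) (hnorm.symm ▸ hconv)
    (hnorm.symm ▸ hout)
  set m := ‖holomorphicSlice (deriv h) (deriv g) c z‖
  have hm : 0 < m := norm_pos_iff.2 (H.deriv_holomorphicSlice_ne_zero (hsub hzcl) hc)
  have hslice : holomorphicSlice (deriv h) (deriv g) c z = m * conj e := by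
    have hnormal := congrArg conj (H.norm_sub_mul_conj_slice_of_isMaxOn_inner (hsub hzcl) hmax)
    rw [hnorm, hza, real_smul] at hnormal
    simp only [map_mul, conj_conj, conj_ofReal] at hnormal
    refine mul_left_cancel₀ (ofReal_ne_zero.2 hρ.ne') ?_
    linear_combination hnormal
  have hsecond := H.re_slice_second_order_nonneg_of_isMaxOn_inner (hsub hzcl) hmax
  have hfactor : (z - a) * holomorphicSlice (deriv h) (deriv g) c z +
      (z - a) ^ 2 * holomorphicSlice (deriv (deriv h)) (deriv (deriv g)) c z =
      ((m * ρ : ℝ) : ℂ) *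
        (1 + ρ * (e * preSchwarzian h g z + e ^ 3 * normalizedWronskian h g z)) := by
    have hee : conj e * e = 1 := by simp [conj_mul', he]
    rw [hza, hslice, real_smul]
    push_cast
    linear_combination ρ * m * hee +
      ρ ^ 2 * H.jacobian_mul_slice_deriv_deriv (hsub hzcl) he hslice
  rw [hfactor, re_ofReal_mul, add_re, one_re, re_ofReal_mul] at hsecond
  exact nonneg_of_mul_nonneg_right hsecond (by positivity)

lemma re_preSchwarzian_nonneg (H : IsSensePreservingOn h g (ball 0 1))
    (hconv : HasConvexDiscImages (harmonicMap h g)) (hz : z ∈ ball 0 1) {e : ℂ} (he : ‖e‖ = 1) :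
    0 ≤ 2 * (1 - ⟪z, e⟫_ℝ) +
      (1 - ‖z‖ ^ 2) * (e * preSchwarzian h g z + e ^ 3 * normalizedWronskian h g z).re := by
  rw [mem_ball_zero_iff] at hz
  set X := (e * preSchwarzian h g z + e ^ 3 * normalizedWronskian h g z).re
  have hd : 0 < 2 * (1 - ⟪z, e⟫_ℝ) := by
    linarith [show ⟪z, e⟫_ℝ ≤ ‖z‖ by simpa [he] using real_inner_le_norm z e]
  have hz2 : 0 < 1 - ‖z‖ ^ 2 := by nlinarith [norm_nonneg z]
  have hinj : InjOn (harmonicMap h g) (ball 0 1) := H.injOn_ball_of_convex_image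
    fun r hr hr1 => hconv 0 (mem_ball_self one_pos) r hr (by simpa using hr1)
  -- A disc of radius less than `ρmax` with outer normal `e` at its boundary point `z` stays inside
  -- the unit disc.
  set ρmax := (1 - ‖z‖ ^ 2) / (2 * (1 - ⟪z, e⟫_ℝ)) with hρmax
  have hρpos : 0 < ρmax := by positivity
  have hlt : ∀ ρ ∈ Ioo 0 ρmax, 0 ≤ 1 + ρ * X := by
    rintro ρ ⟨hρ, hρlt⟩
    have hsum : ‖z - ρ • e‖ + ρ < 1 := norm_sub_smul_add_lt_one he hz (by
      rw [hρmax, lt_div_iff₀ hd] at hρlt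
      linarith)
    have hsub : closedBall (z - ρ • e) ρ ⊆ ball 0 1 :=
      closedBall_subset_ball' (by rw [dist_zero_right]; linarith)
    exact H.re_preSchwarzian_nonneg_of_convex he hρ hsub (hinj.mono hsub)
      (hconv _ (hsub (mem_closedBall_self hρ.le)) ρ hρ (by linarith))
  have hle : 0 ≤ 1 + ρmax * X := le_on_closure hlt continuousOn_const (by fun_prop)
    (closure_Ioo hρpos.ne ▸ right_mem_Icc.2 hρpos.le)
  calc 0 ≤ 2 * (1 - ⟪z, e⟫_ℝ) * (1 + ρmax * X) := mul_nonneg hd.le hle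
    _ = 2 * (1 - ⟪z, e⟫_ℝ) + (1 - ‖z‖ ^ 2) * X := by
      rw [mul_add, mul_one, ← mul_assoc, hρmax, mul_div_cancel₀ _ hd.ne']

theorem norm_preSchwarzian_sub_le (H : IsSensePreservingOn h g (ball 0 1))
    (hconv : HasConvexDiscImages (harmonicMap h g)) (hz : z ∈ ball 0 1) :
    ‖(1 - ‖z‖ ^ 2) * preSchwarzian h g z - 2 * conj z‖ ≤ 4 / √3 := by
  have hbound := norm_le_of_forall_re_add_cube_nonneg (a := 2)
    (b := (1 - ‖z‖ ^ 2) * preSchwarzian h g z - 2 * conj z)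
    (c := (1 - ‖z‖ ^ 2) * normalizedWronskian h g z) fun e he => by
      have hexpand : e * ((1 - ‖z‖ ^ 2) * preSchwarzian h g z - 2 * conj z) +
          e ^ 3 * ((1 - ‖z‖ ^ 2) * normalizedWronskian h g z) =
          ((1 - ‖z‖ ^ 2 : ℝ) : ℂ) * (e * preSchwarzian h g z + e ^ 3 * normalizedWronskian h g z) -
            (2 : ℝ) * (e * conj z) := by
        push_cast
        ring
      rw [hexpand, sub_re, re_ofReal_mul, re_ofReal_mul, ← Complex.inner]
      linarith [H.re_preSchwarzian_nonneg hconv hz he]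
  exact hbound.trans_eq (by ring)

end IsSensePreservingOn

end PreSchwarzian

section Growth

/-- The generalized Koebe function of order `α` on the real axis, extremal for growth problems in
families of order `α`. The value at `α = 0` is a junk value. -/
def koebe (α r : ℝ) : ℝ := (((1 + r) / (1 - r)) ^ α - 1) / (2 * α)

lemma koebe_zero (α : ℝ) : koebe α 0 = 0 := by simp [koebe]

lemma koebe_neg (α r : ℝ) : koebe (-α) r = (1 - ((1 - r) / (1 + r)) ^ α) / (2 * α) := by
  rw [koebe, Real.rpow_neg_eq_inv_rpow, inv_div, mul_neg, div_neg, ← neg_div, neg_sub]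

lemma hasDerivAt_one_add_div_one_sub {t : ℝ} (ht : t ≠ 1) :
    HasDerivAt (fun s : ℝ => (1 + s) / (1 - s)) (2 / (1 - t) ^ 2) t := by
  refine (((hasDerivAt_id t).const_add 1).div ((hasDerivAt_id t).const_sub 1)
    (sub_ne_zero.2 ht.symm)).congr_deriv ?_
  simp only [id]
  ring

lemma hasDerivAt_koebe {α t : ℝ} (hα : α ≠ 0) (ht : t ∈ Ico (0 : ℝ) 1) :
    HasDerivAt (koebe α) (((1 + t) / (1 - t)) ^ α / (1 - t ^ 2)) t := by
  have hadd : 0 < 1 + t := by linarith [ht.1]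
  have hsub : 0 < 1 - t := sub_pos.2 ht.2
  refine ((((hasDerivAt_one_add_div_one_sub ht.2.ne).rpow_const
    (Or.inl (div_pos hadd hsub).ne')).sub_const 1).div_const (2 * α)).congr_deriv ?_
  rw [Real.rpow_sub_one (div_pos hadd hsub).ne', show 1 - t ^ 2 = (1 + t) * (1 - t) by ring]
  field_simp

lemma hasDerivAt_log_one_add_div_one_sub {t : ℝ} (ht : t ∈ Ico (0 : ℝ) 1) :
    HasDerivAt (fun s => Real.log ((1 + s) / (1 - s))) (2 / (1 - t ^ 2)) t := by
  have hadd : 0 < 1 + t := by linarith [ht.1]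
  have hsub : 0 < 1 - t := sub_pos.2 ht.2
  refine ((hasDerivAt_one_add_div_one_sub ht.2.ne).log (div_pos hadd hsub).ne').congr_deriv ?_
  rw [show 1 - t ^ 2 = (1 + t) * (1 - t) by ring]
  field_simp

lemma log_add_sub_log_sub_le {p q r : ℝ} (hq : 0 ≤ q) (hqp : q < p) (hqr : q ≤ r * p)
    (hr1 : r < 1) : Real.log (p + q) - Real.log (p - q) ≤ Real.log ((1 + r) / (1 - r)) := by
  have hadd : 0 < p + q := by linarith
  have hsub : 0 < p - q := sub_pos.2 hqp
  rw [← Real.log_div hadd.ne' hsub.ne']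
  refine Real.log_le_log (div_pos hadd hsub) ?_
  rw [div_le_div_iff₀ hsub (sub_pos.2 hr1)]
  linarith

lemma hasGradientAt_norm_sq {F : ℂ → ℂ} {F' z : ℂ} (hF : HasDerivAt F F' z) :
    HasGradientAt (fun w => ‖F w‖ ^ 2) (2 * F z * conj F') z := by
  rw [hasGradientAt_iff_hasFDerivAt]
  refine (hF.hasFDerivAt.restrictScalars ℝ).norm_sq.congr_fderiv ?_
  ext v
  simp [Complex.inner]
  ring

lemma hasGradientAt_log {E : Type*} [NormedAddCommGroup E] [InnerProductSpace ℝ E]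
    [CompleteSpace E] {f : E → ℝ} {v x : E} (hf : HasGradientAt f v x) (hfx : f x ≠ 0) :
    HasGradientAt (fun y => Real.log (f y)) ((f x)⁻¹ • v) x := by
  rw [hasGradientAt_iff_hasFDerivAt, map_smul]
  exact hf.hasFDerivAt.log hfx

lemma hasGradientAt_log_one_sub_norm_sq {z : ℂ} (hz : z ∈ ball 0 1) :
    HasGradientAt (fun w : ℂ => Real.log (1 - ‖w‖ ^ 2)) (-(2 * z) / (1 - ‖z‖ ^ 2)) z := by
  have hz2 : 0 < 1 - ‖z‖ ^ 2 := by nlinarith [norm_nonneg z, mem_ball_zero_iff.1 hz]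
  have hsq : HasGradientAt (fun w : ℂ => 1 - ‖w‖ ^ 2) (-(2 * z)) z := by
    rw [hasGradientAt_iff_hasFDerivAt, map_neg]
    simpa using (hasGradientAt_norm_sq (hasDerivAt_id z)).hasFDerivAt.const_sub 1
  convert hasGradientAt_log hsq hz2.ne' using 1
  rw [real_smul]
  push_cast
  ring

variable {h g : ℂ → ℂ} {z : ℂ} {U : Set ℂ} {β : ℝ}

namespace IsSensePreservingOn

lemma hasGradientAt_log_jacobian (H : IsSensePreservingOn h g U) (hz : z ∈ U) :
    HasGradientAt (fun w => Real.log (jacobian h g w)) (2 * conj (preSchwarzian h g z)) z := by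
  have hJ := H.jacobian_pos hz
  have hh := hasGradientAt_norm_sq (H.analyticAt_left hz).deriv.differentiableAt.hasDerivAt
  have hg := hasGradientAt_norm_sq (H.analyticAt_right hz).deriv.differentiableAt.hasDerivAt
  have hsub : HasGradientAt (jacobian h g)
      (2 * deriv h z * conj (deriv (deriv h) z) - 2 * deriv g z * conj (deriv (deriv g) z)) z := by
    rw [hasGradientAt_iff_hasFDerivAt, map_sub]
    exact hh.hasFDerivAt.sub hg.hasFDerivAt
  convert hasGradientAt_log hsub hJ.ne' using 1
  simp only [preSchwarzian, map_div₀, map_sub, map_mul, conj_conj, conj_ofReal, real_smul,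
    ofReal_inv]
  ring

lemma hasGradientAt_log_jacobian_add (H : IsSensePreservingOn h g (ball 0 1))
    (hz : z ∈ ball 0 1) :
    HasGradientAt (fun w => Real.log (jacobian h g w) + 2 * Real.log (1 - ‖w‖ ^ 2))
      ((2 / (1 - ‖z‖ ^ 2) : ℝ) • conj ((1 - ‖z‖ ^ 2) * preSchwarzian h g z - 2 * conj z)) z := by
  have hz2 : (1 - ‖z‖ ^ 2 : ℂ) ≠ 0 := by
    have : 1 - ‖z‖ ^ 2 ≠ 0 := by nlinarith [norm_nonneg z, mem_ball_zero_iff.1 hz]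
    exact_mod_cast this
  have hgrad : HasGradientAt (fun w => Real.log (jacobian h g w) + 2 * Real.log (1 - ‖w‖ ^ 2))
      (2 * conj (preSchwarzian h g z) + (2 : ℝ) • (-(2 * z) / (1 - ‖z‖ ^ 2))) z := by
    rw [hasGradientAt_iff_hasFDerivAt, map_add, map_smul]
    exact (H.hasGradientAt_log_jacobian hz).hasFDerivAt.add
      ((hasGradientAt_log_one_sub_norm_sq hz).hasFDerivAt.const_mul 2)
  convert hgrad using 1
  simp only [real_smul, map_sub, map_mul, map_one, map_pow, map_ofNat, conj_conj, conj_ofReal]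
  push_cast
  field_simp
  ring

lemma abs_log_jacobian_add_le (H : IsSensePreservingOn h g (ball 0 1))
    (hβ : ∀ z ∈ ball 0 1, ‖(1 - ‖z‖ ^ 2) * preSchwarzian h g z - 2 * conj z‖ ≤ β)
    (hJ : jacobian h g 0 = 1) (hz : z ∈ ball 0 1) :
    |Real.log (jacobian h g z) + 2 * Real.log (1 - ‖z‖ ^ 2)| ≤
      β * Real.log ((1 + ‖z‖) / (1 - ‖z‖)) := by
  refine norm_image_le_of_norm_fderiv_le (φ := fun t => β * Real.log ((1 + t) / (1 - t)))
    (fun w hw => (H.hasGradientAt_log_jacobian_add hw).hasFDerivAt)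
    (fun t ht => (hasDerivAt_log_one_add_div_one_sub ht).const_mul β) (by simp [hJ]) ?_ hz
  intro w hw
  have hw2 : 0 < 1 - ‖w‖ ^ 2 := by nlinarith [norm_nonneg w, mem_ball_zero_iff.1 hw]
  rw [LinearIsometryEquiv.norm_map, norm_smul, Complex.norm_conj,
    Real.norm_of_nonneg (div_pos two_pos hw2).le, mul_comm]
  exact mul_le_mul_of_nonneg_right (hβ w hw) (div_pos two_pos hw2).le

lemma norm_deriv_right_le (H : IsSensePreservingOn h g (ball 0 1)) (hg0 : deriv g 0 = 0)
    (hz : z ∈ ball 0 1) : ‖deriv g z‖ ≤ ‖z‖ * ‖deriv h z‖ := by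
  have hpos : ∀ w ∈ ball (0 : ℂ) 1, 0 < ‖deriv h w‖ := fun w hw =>
    (norm_nonneg _).trans_lt (H.norm_deriv_lt w hw)
  have hdil : DifferentiableOn ℂ (fun w => deriv g w / deriv h w) (ball 0 1) := fun w hw =>
    ((H.analyticAt_right hw).deriv.differentiableAt.div
      (H.analyticAt_left hw).deriv.differentiableAt
      (norm_pos_iff.1 (hpos w hw))).differentiableWithinAt
  have hschwarz := norm_le_norm_of_mapsTo_ball hdil (fun w hw => by
    rw [mem_closedBall_zero_iff, norm_div, div_le_one (hpos w hw)]
    exact (H.norm_deriv_lt w hw).le) (by simp [hg0]) (mem_ball_zero_iff.1 hz)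
  rwa [norm_div, div_le_iff₀ (hpos z hz)] at hschwarz

lemma log_jacobian (H : IsSensePreservingOn h g U) (hz : z ∈ U) :
    Real.log (jacobian h g z) =
      Real.log (‖deriv h z‖ + ‖deriv g z‖) + Real.log (‖deriv h z‖ - ‖deriv g z‖) := by
  have hlt := H.norm_deriv_lt z hz
  rw [jacobian, sq_sub_sq, Real.log_mul (by linarith [norm_nonneg (deriv g z)])
    (sub_pos.2 hlt).ne']

theorem norm_deriv_add_norm_deriv_le (H : IsSensePreservingOn h g (ball 0 1))
    (hβ : ∀ z ∈ ball 0 1, ‖(1 - ‖z‖ ^ 2) * preSchwarzian h g z - 2 * conj z‖ ≤ β)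
    (hJ : jacobian h g 0 = 1) (hg0 : deriv g 0 = 0) (hz : z ∈ ball 0 1) :
    ‖deriv h z‖ + ‖deriv g z‖ ≤
      ((1 + ‖z‖) / (1 - ‖z‖)) ^ ((β + 1) / 2) / (1 - ‖z‖ ^ 2) := by
  have hz1 := mem_ball_zero_iff.1 hz
  have hq := norm_nonneg (deriv g z)
  have hqp := H.norm_deriv_lt z hz
  have hz2 : 0 < 1 - ‖z‖ ^ 2 := by nlinarith [norm_nonneg z]
  have hadd : 0 < ‖deriv h z‖ + ‖deriv g z‖ := by linarith
  have hquot : 0 < (1 + ‖z‖) / (1 - ‖z‖) := div_pos (by positivity) (sub_pos.2 hz1)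
  have hlog := (abs_le.1 (H.abs_log_jacobian_add_le hβ hJ hz)).2
  have hdil := log_add_sub_log_sub_le hq hqp (H.norm_deriv_right_le hg0 hz) hz1
  rw [H.log_jacobian hz] at hlog
  rw [le_div_iff₀ hz2, Real.le_rpow_iff_log_le (mul_pos hadd hz2) hquot,
    Real.log_mul hadd.ne' hz2.ne']
  linarith

theorem le_norm_deriv_sub_norm_deriv (H : IsSensePreservingOn h g (ball 0 1))
    (hβ : ∀ z ∈ ball 0 1, ‖(1 - ‖z‖ ^ 2) * preSchwarzian h g z - 2 * conj z‖ ≤ β)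
    (hJ : jacobian h g 0 = 1) (hg0 : deriv g 0 = 0) (hz : z ∈ ball 0 1) :
    ((1 + ‖z‖) / (1 - ‖z‖)) ^ (-((β + 1) / 2)) / (1 - ‖z‖ ^ 2) ≤
      ‖deriv h z‖ - ‖deriv g z‖ := by
  have hz1 := mem_ball_zero_iff.1 hz
  have hq := norm_nonneg (deriv g z)
  have hqp := H.norm_deriv_lt z hz
  have hz2 : 0 < 1 - ‖z‖ ^ 2 := by nlinarith [norm_nonneg z]
  have hsub : 0 < ‖deriv h z‖ - ‖deriv g z‖ := sub_pos.2 hqp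
  have hquot : 0 < (1 + ‖z‖) / (1 - ‖z‖) := div_pos (by positivity) (sub_pos.2 hz1)
  have hlog := (abs_le.1 (H.abs_log_jacobian_add_le hβ hJ hz)).1
  have hdil := log_add_sub_log_sub_le hq hqp (H.norm_deriv_right_le hg0 hz) hz1
  rw [H.log_jacobian hz] at hlog
  rw [div_le_iff₀ hz2, Real.rpow_le_iff_le_log hquot (mul_pos hsub hz2),
    Real.log_mul hsub.ne' hz2.ne']
  linarith

theorem norm_harmonicMap_le_koebe (H : IsSensePreservingOn h g (ball 0 1))
    (hβ : ∀ z ∈ ball 0 1, ‖(1 - ‖z‖ ^ 2) * preSchwarzian h g z - 2 * conj z‖ ≤ β)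
    (hJ : jacobian h g 0 = 1) (hg0 : deriv g 0 = 0) (hf0 : harmonicMap h g 0 = 0)
    (hz : z ∈ ball 0 1) : ‖harmonicMap h g z‖ ≤ koebe ((β + 1) / 2) ‖z‖ := by
  have hβ0 : 0 ≤ β := (norm_nonneg _).trans (hβ 0 (mem_ball_self one_pos))
  exact norm_image_le_of_norm_fderiv_le (fun w hw => (H.hasStrictFDerivAt hw).hasFDerivAt)
    (fun t ht => hasDerivAt_koebe (by positivity) ht) (by simp [hf0, koebe_zero])
    (fun w hw => (norm_wirtingerCLM_le _ _).trans (H.norm_deriv_add_norm_deriv_le hβ hJ hg0 hw)) hz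

theorem koebe_le_norm_harmonicMap (H : IsSensePreservingOn h g (ball 0 1))
    (hβ : ∀ z ∈ ball 0 1, ‖(1 - ‖z‖ ^ 2) * preSchwarzian h g z - 2 * conj z‖ ≤ β)
    (hJ : jacobian h g 0 = 1) (hg0 : deriv g 0 = 0) (hf0 : harmonicMap h g 0 = 0)
    (hconv : ∀ r, 0 < r → r < 1 → Convex ℝ (harmonicMap h g '' ball 0 r))
    (hz : z ∈ ball 0 1) : koebe (-((β + 1) / 2)) ‖z‖ ≤ ‖harmonicMap h g z‖ := by
  have hβ0 : 0 ≤ β := (norm_nonneg _).trans (hβ 0 (mem_ball_self one_pos))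
  obtain ⟨r, hzr, hr1⟩ := exists_between (mem_ball_zero_iff.1 hz)
  have hr : 0 < r := (norm_nonneg z).trans_lt hzr
  have hseg : segment ℝ 0 (harmonicMap h g z) ⊆ harmonicMap h g '' ball 0 1 :=
    ((hconv r hr hr1).segment_subset ⟨0, mem_ball_self hr, hf0⟩
      ⟨z, mem_ball_zero_iff.2 hzr, rfl⟩).trans (image_mono (ball_subset_ball hr1.le))
  refine le_norm_image_of_le_norm_fderiv (fun w hw => ⟨_, H.hasStrictFDerivAt hw, fun v => ?_⟩)
    (H.injOn_ball_of_convex_image hconv) hf0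
    (fun t ht => hasDerivAt_koebe (neg_ne_zero.2 (by positivity)) ht) (koebe_zero _) ?_ hz hseg
  · exact (mul_le_mul_of_nonneg_right (H.le_norm_deriv_sub_norm_deriv hβ hJ hg0 hw)
      (norm_nonneg v)).trans (sub_mul_norm_le_norm_wirtingerCLM _ _ _)
  · rintro t ⟨ht0, ht1⟩
    exact div_nonneg (Real.rpow_nonneg (div_nonneg (by linarith) (by linarith)) _) (by nlinarith)

end IsSensePreservingOn

end Growth

/-- Growth theorem: every `f = h + conj g ∈ 𝒜𝒦⁰_H` satisfies, for
`0 < |z| = r < 1`,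
`(√3/(√3+4)) [1 - ((1-r)/(1+r))^{(√3+4)/(2√3)}] ≤ |f(z)|
  ≤ (√3/(√3+4)) [((1+r)/(1-r))^{(√3+4)/(2√3)} - 1]`. -/
theorem AK0_growth (h g : ℂ → ℂ)
    (hh : DifferentiableOn ℂ h (ball (0:ℂ) 1))
    (hg : DifferentiableOn ℂ g (ball (0:ℂ) 1))
    (hsp : ∀ z ∈ ball (0:ℂ) 1, ‖deriv g z‖ < ‖deriv h z‖)
    (h0 : h 0 = 0) (g0 : g 0 = 0) (hd1 : deriv h 0 = 1) (gd1 : deriv g 0 = 0)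
    (hconv : ∀ a ∈ ball (0:ℂ) 1, ∀ r : ℝ, 0 < r → r < 1 - ‖a‖ →
        Convex ℝ ((fun z => h z + conj (g z)) '' ball a r)) :
    ∀ z : ℂ, 0 < ‖z‖ → ‖z‖ < 1 →
      (Real.sqrt 3 / (Real.sqrt 3 + 4)) *
          (1 - ((1 - ‖z‖) / (1 + ‖z‖)) ^ ((Real.sqrt 3 + 4) / (2 * Real.sqrt 3)))
        ≤ ‖h z + conj (g z)‖ ∧
      ‖h z + conj (g z)‖
        ≤ (Real.sqrt 3 / (Real.sqrt 3 + 4)) *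
          (((1 + ‖z‖) / (1 - ‖z‖)) ^ ((Real.sqrt 3 + 4) / (2 * Real.sqrt 3)) - 1) := by
  intro z _ hz1
  have hz : z ∈ ball (0 : ℂ) 1 := mem_ball_zero_iff.2 hz1
  have H : IsSensePreservingOn h g (ball 0 1) := ⟨isOpen_ball, hh, hg, hsp⟩
  have hdiscs : HasConvexDiscImages (harmonicMap h g) := hconv
  have hJ : jacobian h g 0 = 1 := by simp [jacobian, hd1, gd1]
  have hf0 : harmonicMap h g 0 = 0 := by simp [harmonicMap, h0, g0]
  have hcentred : ∀ r, 0 < r → r < 1 → Convex ℝ (harmonicMap h g '' ball 0 r) :=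
    fun r hr hr1 => hdiscs 0 (mem_ball_self one_pos) r hr (by simpa using hr1)
  have hβ := fun w hw => H.norm_preSchwarzian_sub_le (z := w) hdiscs hw
  have horder : (4 / √3 + 1) / 2 = (√3 + 4) / (2 * √3) := by field_simp; ring
  have hfactor : ∀ x, x / (2 * ((√3 + 4) / (2 * √3))) = √3 / (√3 + 4) * x := by
    intro x
    field_simp
  have hlower := H.koebe_le_norm_harmonicMap hβ hJ gd1 hf0 hcentred hz
  have hupper := H.norm_harmonicMap_le_koebe hβ hJ gd1 hf0 hz
  rw [horder, koebe_neg, hfactor] at hlower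
  rw [horder, koebe, hfactor] at hupper
  exact ⟨hlower, hupper⟩
end
end
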